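/- If u is a C² function on ℝ^{d+1}₊ that is κ-harmonic (i.e. Δ_κu = 0 at every point of ℝ^{d+1}₊ whose x-coordinate is regular), then u is infinitely differentiable on ℝ^{d+1}₊. -/

import Mathlib

/-!
After an affine change of variables it suffices to treat the unit ball of `ℝ^(d+1)`: every point of
the half-space lies in a ball contained in it and centred on the axis `x = 0`, which is fixed by the
reflections. There, by the Fischer decomposition for `Δ_κ = ∑ Tᵢ²` with `Tᵢ` the Dunkl operators,
every polynomial agrees on the sphere with a `κ`-harmonic polynomial, so by Stone–Weierstrass and
the weak maximum principle `u` is a uniform limit of `κ`-harmonic polynomials. What is needed is a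
bound for the derivatives of a `κ`-harmonic polynomial `H` on `|x| ≤ r < 1` in terms of its maximum
on the sphere, independent of the degree.

For this no Poisson kernel is used. The value at `0` of the harmonic extension of boundary values is
a positive functional, and integration by parts shows that homogeneous harmonic polynomials of
different degrees are orthogonal for it. So the homogeneous components `Hₙ` of `H` have square mean
at most `(max |H|)²`. Markov's inequality and the moments of linear forms bound the maximum of `Hₙ`
on the sphere by its square mean up to a power of `n + 1`, derivatives cost further powers of
`n + 1`, and homogeneity contributes the factor `rⁿ`, which makes the sum over `n` converge.
-/

open MeasureTheory Filter Metric
open scoped RealInnerProductSpace Topology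

noncomputable section

/-- Euclidean space `ℝ^d`. -/
abbrev Ed (d : ℕ) : Type := EuclideanSpace ℝ (Fin d)

/-- The reflection `σ_α(x) = x - ⟨α,x⟩α` (for roots normalized by `⟨α,α⟩ = 2`). -/
def reflAt {d : ℕ} (α x : Ed d) : Ed d := x - ⟪α, x⟫ • α

/-- The reflection group `G` generated by the reflections `σ_α`, `α ∈ R`, realized as the
submonoid of self-maps of `ℝ^d` generated by the reflections (each reflection is an
involution, so this is in fact a group of transformations). -/
def dunklGroup {d : ℕ} (R : Finset (Ed d)) : Submonoid (Function.End (Ed d)) :=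
  Submonoid.closure {f : Function.End (Ed d) | ∃ α ∈ R, f = reflAt α}

/-- A (normalized) root system `R` with positive subsystem `Rp` and
`G`-invariant nonnegative multiplicity function `κ`. -/
structure IsRootSystem {d : ℕ} (R Rp : Finset (Ed d)) (κ : Ed d → ℝ) : Prop where
  nonzero : ∀ α ∈ R, α ≠ (0 : Ed d)
  norm_two : ∀ α ∈ R, ⟪α, α⟫ = (2 : ℝ)
  refl_mem : ∀ α ∈ R, ∀ β ∈ R, reflAt α β ∈ R
  pos_sub : Rp ⊆ R
  pos_split : ∀ α ∈ R, (α ∈ Rp ∧ ¬(-α ∈ Rp)) ∨ (¬(α ∈ Rp) ∧ -α ∈ Rp)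
  kappa_nonneg : ∀ α ∈ R, 0 ≤ κ α
  kappa_inv : ∀ σ ∈ dunklGroup R, ∀ α ∈ R, κ (σ α) = κ α

/-- `x ∈ ℝ^d` is regular if `⟨α,x⟩ ≠ 0` for all roots `α ∈ R`. -/
def isRegular {d : ℕ} (R : Finset (Ed d)) (x : Ed d) : Prop :=
  ∀ α ∈ R, ⟪α, x⟫ ≠ (0 : ℝ)

/-- Second directional derivative of `u` at `p` in direction `v`. -/
def pd2 {d : ℕ} (u : Ed d × ℝ → ℝ) (p v : Ed d × ℝ) : ℝ :=
  fderiv ℝ (fun q => fderiv ℝ u q v) p v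

/-- The Euclidean Laplacian on `ℝ^{d+1} = ℝ^d × ℝ`. -/
def lapE {d : ℕ} (u : Ed d × ℝ → ℝ) (p : Ed d × ℝ) : ℝ :=
  (∑ i : Fin d, pd2 u p (EuclideanSpace.single i 1, 0)) + pd2 u p (0, 1)

/-- The Dunkl Laplacian `Δ_κ` on `ℝ^{d+1}` (the Dunkl operators act in the `x`-variables). -/
def dunklLap {d : ℕ} (Rp : Finset (Ed d)) (κ : Ed d → ℝ) (u : Ed d × ℝ → ℝ)
    (p : Ed d × ℝ) : ℝ :=
  lapE u p + 2 * ∑ α ∈ Rp, κ α *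
    (fderiv ℝ u p (α, 0) / ⟪α, p.1⟫ - (u p - u (reflAt α p.1, p.2)) / ⟪α, p.1⟫ ^ 2)

/-- The open upper half-space `ℝ^{d+1}₊`. -/
def upperHS (d : ℕ) : Set (Ed d × ℝ) := {p | 0 < p.2}

/-- `u` is `κ`-harmonic on `Ω`: `u` is `C²` on `Ω` and `Δ_κ u = 0` at every point of `Ω`
whose `x`-coordinate is regular. -/
def KHarmonicOn {d : ℕ} (R Rp : Finset (Ed d)) (κ : Ed d → ℝ) (u : Ed d × ℝ → ℝ)
    (Ω : Set (Ed d × ℝ)) : Prop :=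
  ContDiffOn ℝ 2 u Ω ∧ ∀ p ∈ Ω, isRegular R p.1 → dunklLap Rp κ u p = 0

/-- The cone `Γ_a(x)` of aperture `a` with vertex `(x,0)`. -/
def cone {d : ℕ} (a : ℝ) (x : Ed d) : Set (Ed d × ℝ) :=
  {p | 0 < p.2 ∧ dist p.1 x < a * p.2}

/-- The truncated cone `Γ_a^h(x)`. -/
def coneT {d : ℕ} (a h : ℝ) (x : Ed d) : Set (Ed d × ℝ) :=
  {p | 0 < p.2 ∧ p.2 < h ∧ dist p.1 x < a * p.2}

/-- `u` has a finite non-tangential limit at `(x,0)`. -/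
def HasNTLimit {d : ℕ} (u : Ed d × ℝ → ℝ) (x : Ed d) : Prop :=
  ∀ a > (0 : ℝ), ∃ L : ℝ, Tendsto u (𝓝[cone a x] (x, (0 : ℝ))) (𝓝 L)

/-- `u` is non-tangentially bounded at `(x,0)`. -/
def NTBounded {d : ℕ} (u : Ed d × ℝ → ℝ) (x : Ed d) : Prop :=
  ∃ a > (0 : ℝ), ∃ h > (0 : ℝ), ∃ M : ℝ, ∀ p ∈ coneT a h x, |u p| ≤ M

/-- A subset of `ℝ^d` is `G`-invariant. -/
def GInvSet {d : ℕ} (R : Finset (Ed d)) (E : Set (Ed d)) : Prop :=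
  ∀ σ ∈ dunklGroup R, σ '' E = E

/-! ### Dunkl operators on polynomials -/

/-- A root system in `ℝ^ι` with an invariant multiplicity function, in coordinates: the roots (of
squared length `2`) are indexed by `J`, and `perm i` is the permutation of the indices induced by
the reflection in the root `i`. All roots are listed, positive or not, so `mult` plays the role of
`κ / 2`. -/
structure DunklSystem (ι J : Type*) [Fintype ι] where
  root : J → ι → ℝ
  mult : J → ℝ
  perm : J → J ≃ J
  root_dotProduct_self : ∀ j, root j ⬝ᵥ root j = 2
  root_perm : ∀ i j, root (perm i j) = root j - (root i ⬝ᵥ root j) • root i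
  mult_perm : ∀ i j, mult (perm i j) = mult j
  mult_nonneg : ∀ j, 0 ≤ mult j

open MvPolynomial

section PolynomialOperators

variable {ι : Type*} [Fintype ι]

/-- The linear form `x ↦ v ⬝ᵥ x` as a polynomial. -/
def linForm : (ι → ℝ) →ₗ[ℝ] MvPolynomial ι ℝ := Fintype.linearCombination ℝ X

lemma linForm_apply (v : ι → ℝ) : linForm v = ∑ i, v i • (X i : MvPolynomial ι ℝ) := rfl

lemma eval_linForm (x v : ι → ℝ) : eval x (linForm v) = v ⬝ᵥ x := by
  simp [linForm_apply, dotProduct, smul_eval]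

lemma linForm_isHomogeneous (v : ι → ℝ) : (linForm v).IsHomogeneous 1 := by
  rw [linForm_apply]
  exact IsHomogeneous.sum _ _ _ fun i _ => smul_eq_C_mul (X i) (v i) ▸ isHomogeneous_C_mul_X _ _

/-- The derivative of polynomials in the direction `v`. -/
def dirDeriv : (ι → ℝ) →ₗ[ℝ] Derivation ℝ (MvPolynomial ι ℝ) (MvPolynomial ι ℝ) :=
  Fintype.linearCombination ℝ pderiv

lemma dirDeriv_apply (v : ι → ℝ) (f : MvPolynomial ι ℝ) :
    dirDeriv v f = ∑ i, v i • pderiv i f := by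
  simp only [dirDeriv, Fintype.linearCombination_apply, ← Derivation.coeFnAddMonoidHom_apply,
    map_sum, Finset.sum_apply]
  rfl

lemma dirDeriv_linForm (v w : ι → ℝ) : dirDeriv v (linForm w) = C (v ⬝ᵥ w) := by
  classical
  simp [dirDeriv_apply, linForm_apply, pderiv_X, Pi.single_apply, dotProduct, smul_eq_C_mul,
    mul_comm]

variable [DecidableEq ι]

lemma linForm_single (i : ι) : linForm (Pi.single i 1) = (X i : MvPolynomial ι ℝ) := by
  simp [linForm, Fintype.linearCombination_apply_single]

lemma dirDeriv_single (i : ι) (f : MvPolynomial ι ℝ) :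
    dirDeriv (Pi.single i 1) f = pderiv i f := by
  simp [dirDeriv, Fintype.linearCombination_apply_single]

end PolynomialOperators

lemma linearMap_ext_of_linForm_mul {ι : Type*} [Fintype ι]
    {U V : MvPolynomial ι ℝ →ₗ[ℝ] MvPolynomial ι ℝ} (h1 : U 1 = V 1)
    (hmul : ∀ (v : ι → ℝ) f, U f = V f → U (linForm v * f) = V (linForm v * f)) : U = V := by
  classical
  refine LinearMap.ext fun f => ?_
  induction f using MvPolynomial.induction_on with
  | C c => rw [← mul_one (C c), ← smul_eq_C_mul, map_smul, map_smul, h1]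
  | add f g hf hg => rw [map_add, map_add, hf, hg]
  | mul_X f i hf => rw [mul_comm, ← linForm_single]; exact hmul _ _ hf

namespace DunklSystem

variable {ι J : Type*} [Fintype ι] (D : DunklSystem ι J)

/-- The reflection in the hyperplane orthogonal to the root `j`. -/
def reflection (j : J) : (ι → ℝ) →ₗ[ℝ] (ι → ℝ) where
  toFun v := v - (D.root j ⬝ᵥ v) • D.root j
  map_add' v w := by rw [dotProduct_add]; module
  map_smul' c v := by simp only [dotProduct_smul, smul_eq_mul, RingHom.id_apply]; module

lemma reflection_apply (j : J) (v : ι → ℝ) :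
    D.reflection j v = v - (D.root j ⬝ᵥ v) • D.root j := rfl

lemma reflection_root (i j : J) : D.reflection i (D.root j) = D.root (D.perm i j) :=
  (D.root_perm i j).symm

lemma reflection_root_self (j : J) : D.reflection j (D.root j) = -D.root j := by
  rw [reflection_apply, D.root_dotProduct_self]; module

lemma dotProduct_reflection (j : J) (v w : ι → ℝ) :
    v ⬝ᵥ D.reflection j w = D.reflection j v ⬝ᵥ w := by
  simp only [reflection_apply, sub_dotProduct, dotProduct_sub, smul_dotProduct, dotProduct_smul,
    smul_eq_mul, dotProduct_comm v (D.root j)]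
  ring

lemma reflection_reflection (j : J) (v : ι → ℝ) : D.reflection j (D.reflection j v) = v := by
  simp only [reflection_apply, dotProduct_sub, dotProduct_smul, D.root_dotProduct_self, smul_eq_mul]
  module

lemma reflection_dotProduct_reflection (j : J) (v w : ι → ℝ) :
    D.reflection j v ⬝ᵥ D.reflection j w = v ⬝ᵥ w := by
  rw [dotProduct_reflection, reflection_reflection]

lemma linForm_root_ne_zero (j : J) : linForm (D.root j) ≠ 0 := fun h => by
  have h2 := eval_linForm (D.root j) (D.root j)
  rw [h, D.root_dotProduct_self, map_zero] at h2
  exact two_ne_zero h2.symm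

/-- Composition of polynomials with the reflection in the root `j`. -/
def reflHom (j : J) : MvPolynomial ι ℝ →ₐ[ℝ] MvPolynomial ι ℝ :=
  aeval fun i => X i - D.root j i • linForm (D.root j)

lemma reflHom_linForm (j : J) (v : ι → ℝ) :
    D.reflHom j (linForm v) = linForm (D.reflection j v) := by
  simp only [linForm_apply v, map_sum, map_smul, reflHom, aeval_X, smul_sub,
    Finset.sum_sub_distrib, smul_smul, ← Finset.sum_smul, reflection_apply, map_sub]
  rw [dotProduct_comm, dotProduct]

lemma eval_reflHom (j : J) (x : ι → ℝ) (f : MvPolynomial ι ℝ) :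
    eval x (D.reflHom j f) = eval (D.reflection j x) f := by
  have h : (aeval x).comp (D.reflHom j) = aeval (D.reflection j x) := by
    refine algHom_ext fun i => ?_
    simp [reflHom, reflection_apply, aeval_eq_eval, eval_linForm, smul_eval, mul_comm]
  simpa [aeval_eq_eval] using DFunLike.congr_fun h f

lemma reflHom_reflHom (j : J) (f : MvPolynomial ι ℝ) : D.reflHom j (D.reflHom j f) = f :=
  MvPolynomial.funext fun x => by simp only [eval_reflHom, reflection_reflection]

lemma reflHom_perm_reflHom (i j : J) (f : MvPolynomial ι ℝ) :
    D.reflHom (D.perm i j) (D.reflHom i f) = D.reflHom i (D.reflHom j f) := by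
  refine MvPolynomial.funext fun x => ?_
  simp only [eval_reflHom]
  rw [D.reflection_apply (D.perm i j), ← reflection_root, ← dotProduct_reflection, map_sub,
    map_smul, reflection_reflection, reflection_apply D j]

lemma linForm_root_dvd_sub_reflHom (j : J) (f : MvPolynomial ι ℝ) :
    linForm (D.root j) ∣ f - D.reflHom j f := by
  classical
  induction f using MvPolynomial.induction_on with
  | C c => simp [reflHom]
  | add f g hf hg => rw [map_add, add_sub_add_comm]; exact dvd_add hf hg
  | mul_X f i hf =>
    obtain ⟨q, hq⟩ := hf
    refine ⟨q * X i + D.root j i • D.reflHom j f, ?_⟩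
    rw [map_mul, ← linForm_single, reflHom_linForm, reflection_apply, map_sub, map_smul,
      dotProduct_single_one, smul_eq_C_mul, smul_eq_C_mul]
    linear_combination linForm (Pi.single i (1 : ℝ)) * hq

/-- The divided difference `(f - f ∘ σ_α) / ⟨α, ·⟩` for the root `α` with index `j`, which is again
a polynomial. -/
def divDiff (j : J) : MvPolynomial ι ℝ →ₗ[ℝ] MvPolynomial ι ℝ where
  toFun f := (D.linForm_root_dvd_sub_reflHom j f).choose
  map_add' f g := mul_left_cancel₀ (D.linForm_root_ne_zero j) <| by
    rw [mul_add, ← (D.linForm_root_dvd_sub_reflHom j (f + g)).choose_spec,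
      ← (D.linForm_root_dvd_sub_reflHom j f).choose_spec,
      ← (D.linForm_root_dvd_sub_reflHom j g).choose_spec, map_add, add_sub_add_comm]
  map_smul' c f := mul_left_cancel₀ (D.linForm_root_ne_zero j) <| by
    rw [RingHom.id_apply, mul_smul_comm,
      ← (D.linForm_root_dvd_sub_reflHom j (c • f)).choose_spec,
      ← (D.linForm_root_dvd_sub_reflHom j f).choose_spec, map_smul, smul_sub]

lemma linForm_root_mul_divDiff (j : J) (f : MvPolynomial ι ℝ) :
    linForm (D.root j) * D.divDiff j f = f - D.reflHom j f :=
  (D.linForm_root_dvd_sub_reflHom j f).choose_spec.symm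

variable {D} in
lemma divDiff_eq {j : J} {f q : MvPolynomial ι ℝ}
    (h : linForm (D.root j) * q = f - D.reflHom j f) : D.divDiff j f = q :=
  mul_left_cancel₀ (D.linForm_root_ne_zero j) (by rw [h, linForm_root_mul_divDiff])

lemma divDiff_one (j : J) : D.divDiff j 1 = 0 := divDiff_eq (by simp)

lemma divDiff_mul (j : J) (f g : MvPolynomial ι ℝ) :
    D.divDiff j (f * g) = f * D.divDiff j g + D.divDiff j f * D.reflHom j g :=
  divDiff_eq <| by
    rw [map_mul]
    linear_combination f * D.linForm_root_mul_divDiff j g +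
      D.reflHom j g * D.linForm_root_mul_divDiff j f

lemma divDiff_linForm (j : J) (v : ι → ℝ) : D.divDiff j (linForm v) = C (D.root j ⬝ᵥ v) :=
  divDiff_eq <| by
    rw [reflHom_linForm, reflection_apply, map_sub, map_smul, smul_eq_C_mul]
    ring

lemma reflHom_divDiff (j : J) (f : MvPolynomial ι ℝ) :
    D.reflHom j (D.divDiff j f) = D.divDiff j f := by
  apply mul_left_cancel₀ (D.linForm_root_ne_zero j)
  have h := congrArg (D.reflHom j) (D.linForm_root_mul_divDiff j f)
  rw [map_mul, reflHom_linForm, reflection_root_self, map_neg, map_sub, reflHom_reflHom] at h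
  linear_combination -h - D.linForm_root_mul_divDiff j f

variable [Fintype J]

/-- The Dunkl operator `∂_v + ∑_α k(α) ⟨α, v⟩ (1 - σ_α) / ⟨α, ·⟩`, the sum being over all roots. -/
def dunklOp : (ι → ℝ) →ₗ[ℝ] MvPolynomial ι ℝ →ₗ[ℝ] MvPolynomial ι ℝ where
  toFun v := (dirDeriv v).toLinearMap + ∑ j, (D.mult j * (D.root j ⬝ᵥ v)) • D.divDiff j
  map_add' v w := by
    simp only [map_add, Derivation.coe_add_linearMap, dotProduct_add, mul_add, add_smul,
      Finset.sum_add_distrib]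
    abel
  map_smul' c v := by
    simp only [map_smul, Derivation.coe_smul_linearMap, dotProduct_smul, smul_eq_mul,
      mul_left_comm _ c, mul_smul, RingHom.id_apply, smul_add, Finset.smul_sum]

lemma dunklOp_apply (v : ι → ℝ) (f : MvPolynomial ι ℝ) :
    D.dunklOp v f = dirDeriv v f + ∑ j, (D.mult j * (D.root j ⬝ᵥ v)) • D.divDiff j f := by
  simp [dunklOp]

lemma dunklOp_one (v : ι → ℝ) : D.dunklOp v 1 = 0 := by
  simp [dunklOp_apply, divDiff_one]

lemma dunklOp_linForm_mul (v w : ι → ℝ) (f : MvPolynomial ι ℝ) :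
    D.dunklOp v (linForm w * f) = linForm w * D.dunklOp v f + (v ⬝ᵥ w) • f
      + ∑ j, (D.mult j * (D.root j ⬝ᵥ v) * (D.root j ⬝ᵥ w)) • D.reflHom j f := by
  simp only [dunklOp_apply, Derivation.leibniz, smul_eq_mul, dirDeriv_linForm, divDiff_mul,
    divDiff_linForm, mul_comm f, ← smul_eq_C_mul, smul_add, Finset.sum_add_distrib, mul_add,
    Finset.mul_sum, smul_smul, mul_smul_comm]
  abel

lemma reflHom_dunklOp (j : J) (v : ι → ℝ) (f : MvPolynomial ι ℝ) :
    D.reflHom j (D.dunklOp v f) = D.dunklOp (D.reflection j v) (D.reflHom j f) := by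
  suffices h : (D.reflHom j).toLinearMap ∘ₗ D.dunklOp v =
      D.dunklOp (D.reflection j v) ∘ₗ (D.reflHom j).toLinearMap from LinearMap.congr_fun h f
  refine linearMap_ext_of_linForm_mul (by simp [dunklOp_one]) fun w f hf => ?_
  simp only [LinearMap.comp_apply, AlgHom.toLinearMap_apply] at hf ⊢
  simp only [map_mul, reflHom_linForm, dunklOp_linForm_mul, map_add, map_smul, map_sum]
  rw [hf, reflection_dotProduct_reflection, ← (D.perm j).sum_comp fun l =>
    (D.mult l * (D.root l ⬝ᵥ D.reflection j v) * (D.root l ⬝ᵥ D.reflection j w)) •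
      D.reflHom l (D.reflHom j f)]
  simp only [D.mult_perm, ← reflection_root, reflection_dotProduct_reflection,
    reflHom_perm_reflHom]

-- The commutator kills `1` and commutes with multiplication by linear forms.
lemma dunklOp_comm (v w : ι → ℝ) (f : MvPolynomial ι ℝ) :
    D.dunklOp v (D.dunklOp w f) = D.dunklOp w (D.dunklOp v f) := by
  suffices h : D.dunklOp v ∘ₗ D.dunklOp w = D.dunklOp w ∘ₗ D.dunklOp v from LinearMap.congr_fun h f
  refine linearMap_ext_of_linForm_mul (by simp [dunklOp_one]) fun x f hf => ?_
  simp only [LinearMap.comp_apply] at hf ⊢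
  have hrefl (v w : ι → ℝ) : ∑ j, (D.mult j * (D.root j ⬝ᵥ v) * (D.root j ⬝ᵥ x)) •
        D.reflHom j (D.dunklOp w f) =
      ∑ j, (D.mult j * (D.root j ⬝ᵥ v) * (D.root j ⬝ᵥ x)) • D.dunklOp w (D.reflHom j f) -
      ∑ j, (D.mult j * (D.root j ⬝ᵥ x)) • ((D.root j ⬝ᵥ v) * (D.root j ⬝ᵥ w)) •
        D.dunklOp (D.root j) (D.reflHom j f) := by
    rw [← Finset.sum_sub_distrib]
    refine Finset.sum_congr rfl fun j _ => ?_
    rw [reflHom_dunklOp, reflection_apply, map_sub, map_smul, LinearMap.sub_apply,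
      LinearMap.smul_apply]
    module
  simp only [dunklOp_linForm_mul, map_add, map_smul, map_sum, hf, hrefl,
    mul_comm (_ ⬝ᵥ w) (_ ⬝ᵥ v)]
  abel

end DunklSystem

/-! ### The Dunkl Laplacian and homogeneity -/

lemma homogeneousComponent_add_mul {σ R : Type*} [CommSemiring R] {p : MvPolynomial σ R} {m : ℕ}
    (hp : p.IsHomogeneous m) (n : ℕ) (q : MvPolynomial σ R) :
    homogeneousComponent (m + n) (p * q) = p * homogeneousComponent n q := by
  let := gradedAlgebra (σ := σ) (R := R)
  rw [← decomposition.decompose'_apply, ← decomposition.decompose'_apply]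
  exact DirectSum.coe_decompose_mul_add_of_left_mem (homogeneousSubmodule σ R)
    ((mem_homogeneousSubmodule m p).2 hp)

lemma isHomogeneous_of_mul {σ R : Type*} [CommRing R] [IsDomain R] {p q : MvPolynomial σ R}
    {m n : ℕ} (hp : p.IsHomogeneous m) (hp0 : p ≠ 0) (hpq : (p * q).IsHomogeneous (m + n)) :
    q.IsHomogeneous n := by
  have h := homogeneousComponent_add_mul hp n q
  rw [homogeneousComponent_eq_self hpq] at h
  rw [mul_left_cancel₀ hp0 h]
  exact homogeneousComponent_isHomogeneous n q

lemma isHomogeneous_smul {σ R : Type*} [CommSemiring R] {p : MvPolynomial σ R} {n : ℕ} (c : R)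
    (hp : p.IsHomogeneous n) : (c • p).IsHomogeneous n :=
  (homogeneousSubmodule σ R n).smul_mem c hp

/-- The square of the Euclidean norm as a polynomial. -/
def normSqPoly {ι : Type*} [Fintype ι] : MvPolynomial ι ℝ := ∑ i, X i * X i

lemma eval_normSqPoly {ι : Type*} [Fintype ι] (x : ι → ℝ) : eval x normSqPoly = x ⬝ᵥ x := by
  simp [normSqPoly, dotProduct]

lemma normSqPoly_isHomogeneous {ι : Type*} [Fintype ι] :
    (normSqPoly : MvPolynomial ι ℝ).IsHomogeneous 2 :=
  IsHomogeneous.sum _ _ _ fun i _ => (isHomogeneous_X ℝ i).mul (isHomogeneous_X ℝ i)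

namespace DunklSystem

section Homogeneity

variable {ι J : Type*} [Fintype ι] (D : DunklSystem ι J) {f : MvPolynomial ι ℝ} {n : ℕ}

lemma reflHom_isHomogeneous (j : J) (hf : f.IsHomogeneous n) : (D.reflHom j f).IsHomogeneous n := by
  have h := hf.aeval (fun i => X i - D.root j i • linForm (D.root j)) fun i =>
    (isHomogeneous_X ℝ i).sub (isHomogeneous_smul _ (linForm_isHomogeneous (D.root j)))
  rwa [one_mul] at h

lemma divDiff_isHomogeneous (j : J) (hf : f.IsHomogeneous (n + 1)) :
    (D.divDiff j f).IsHomogeneous n := by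
  refine isHomogeneous_of_mul (linForm_isHomogeneous _) (D.linForm_root_ne_zero j) ?_
  rw [linForm_root_mul_divDiff, add_comm]
  exact hf.sub (D.reflHom_isHomogeneous j hf)

variable [Fintype J]

lemma dunklOp_isHomogeneous (v : ι → ℝ) (hf : f.IsHomogeneous (n + 1)) :
    (D.dunklOp v f).IsHomogeneous n := by
  rw [dunklOp_apply, dirDeriv_apply]
  exact (IsHomogeneous.sum _ _ _ fun i _ => isHomogeneous_smul _ hf.pderiv).add
    (IsHomogeneous.sum _ _ _ fun j _ => isHomogeneous_smul _ (D.divDiff_isHomogeneous j hf))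

lemma dunklOp_eq_zero (v : ι → ℝ) (hf : f.IsHomogeneous 0) : D.dunklOp v f = 0 := by
  rw [← totalDegree_zero_iff_isHomogeneous, totalDegree_eq_zero_iff_eq_C] at hf
  rw [hf, ← mul_one (C _), ← smul_eq_C_mul, map_smul, dunklOp_one, smul_zero]

end Homogeneity

section Laplacian

variable {ι J : Type*} [Fintype ι] [Fintype J] (D : DunklSystem ι J)

/-- The terms of the last sum are odd under the corresponding reflections, see
`reflHom_divDiff_mul_sub`. -/
lemma dunklOp_mul (v : ι → ℝ) (f g : MvPolynomial ι ℝ) :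
    D.dunklOp v (f * g) = f * D.dunklOp v g + D.dunklOp v f * g
      - ∑ j, (D.mult j * (D.root j ⬝ᵥ v)) • (D.divDiff j f * (g - D.reflHom j g)) := by
  simp only [dunklOp_apply, Derivation.leibniz, divDiff_mul, smul_eq_mul, mul_sub, smul_sub,
    smul_add, Finset.sum_sub_distrib, Finset.sum_add_distrib, add_mul, mul_add, Finset.sum_mul,
    Finset.mul_sum, smul_mul_assoc, mul_smul_comm, mul_comm g]
  abel

variable [DecidableEq ι]

lemma sum_smul_dunklOp_single (v : ι → ℝ) (f : MvPolynomial ι ℝ) :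
    ∑ i, v i • D.dunklOp (Pi.single i 1) f = D.dunklOp v f := by
  conv_rhs => rw [pi_eq_sum_univ' v]
  simp only [map_sum, map_smul, LinearMap.sum_apply, LinearMap.smul_apply]

/-- The Dunkl Laplacian on polynomials, as the sum of the squares of the Dunkl operators. -/
def dunklLaplacian : MvPolynomial ι ℝ →ₗ[ℝ] MvPolynomial ι ℝ :=
  ∑ i, D.dunklOp (Pi.single i 1) ∘ₗ D.dunklOp (Pi.single i 1)

lemma dunklLaplacian_apply (f : MvPolynomial ι ℝ) :
    D.dunklLaplacian f = ∑ i, D.dunklOp (Pi.single i 1) (D.dunklOp (Pi.single i 1) f) := by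
  simp [dunklLaplacian]

lemma dunklLaplacian_one : D.dunklLaplacian 1 = 0 := by
  simp [dunklLaplacian_apply, dunklOp_one]

lemma dunklOp_dunklLaplacian (v : ι → ℝ) (f : MvPolynomial ι ℝ) :
    D.dunklOp v (D.dunklLaplacian f) = D.dunklLaplacian (D.dunklOp v f) := by
  simp only [dunklLaplacian_apply, map_sum, D.dunklOp_comm v]

lemma dunklLaplacian_linForm_mul (w : ι → ℝ) (f : MvPolynomial ι ℝ) :
    D.dunklLaplacian (linForm w * f) =
      linForm w * D.dunklLaplacian f + (2 : ℝ) • D.dunklOp w f := by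
  have hsquare (i : ι) : D.dunklOp (Pi.single i 1) (D.dunklOp (Pi.single i 1) (linForm w * f)) =
      linForm w * D.dunklOp (Pi.single i 1) (D.dunklOp (Pi.single i 1) f)
        + (2 : ℝ) • w i • D.dunklOp (Pi.single i 1) f
        + ∑ j, (D.mult j * (D.root j ⬝ᵥ w)) •
          (D.reflHom j (D.root j i • D.dunklOp (Pi.single i 1) f)
            + D.root j i • D.dunklOp (Pi.single i 1) (D.reflHom j f)) := by
    simp only [dunklOp_linForm_mul, map_add, map_smul, map_sum, single_one_dotProduct,
      dotProduct_single_one, smul_add, Finset.sum_add_distrib, smul_smul,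
      mul_right_comm _ (D.root _ i)]
    module
  have hanti (j : J) : D.reflHom j (D.dunklOp (D.root j) f) +
      D.dunklOp (D.root j) (D.reflHom j f) = 0 := by
    rw [reflHom_dunklOp, reflection_root_self, map_neg, LinearMap.neg_apply, neg_add_cancel]
  simp only [dunklLaplacian_apply, hsquare, Finset.sum_add_distrib, ← Finset.mul_sum,
    ← Finset.smul_sum, sum_smul_dunklOp_single]
  rw [Finset.sum_comm]
  simp only [← Finset.smul_sum, Finset.sum_add_distrib, ← map_sum, sum_smul_dunklOp_single, hanti,
    smul_zero, Finset.sum_const_zero, add_zero]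

lemma reflHom_dunklLaplacian (j : J) (f : MvPolynomial ι ℝ) :
    D.reflHom j (D.dunklLaplacian f) = D.dunklLaplacian (D.reflHom j f) := by
  suffices h : (D.reflHom j).toLinearMap ∘ₗ D.dunklLaplacian =
      D.dunklLaplacian ∘ₗ (D.reflHom j).toLinearMap from LinearMap.congr_fun h f
  refine linearMap_ext_of_linForm_mul (by simp [dunklLaplacian_one]) fun w f hf => ?_
  simp only [LinearMap.comp_apply, AlgHom.toLinearMap_apply] at hf ⊢
  simp only [dunklLaplacian_linForm_mul, map_mul, reflHom_linForm, map_add, map_smul, hf,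
    reflHom_dunklOp]

lemma dunklLaplacian_isHomogeneous {f : MvPolynomial ι ℝ} {n : ℕ} (hf : f.IsHomogeneous (n + 2)) :
    (D.dunklLaplacian f).IsHomogeneous n := by
  rw [dunklLaplacian_apply]
  exact IsHomogeneous.sum _ _ _ fun i _ => D.dunklOp_isHomogeneous _ (D.dunklOp_isHomogeneous _ hf)

lemma dunklLaplacian_eq_zero_of_lt_two {f : MvPolynomial ι ℝ} {n : ℕ} (hf : f.IsHomogeneous n)
    (hn : n < 2) : D.dunklLaplacian f = 0 := by
  rw [dunklLaplacian_apply]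
  refine Finset.sum_eq_zero fun i _ => ?_
  interval_cases n
  · rw [D.dunklOp_eq_zero _ hf, map_zero]
  · exact D.dunklOp_eq_zero _ (D.dunklOp_isHomogeneous _ hf)

lemma homogeneousComponent_dunklLaplacian (f : MvPolynomial ι ℝ) (n : ℕ) :
    homogeneousComponent n (D.dunklLaplacian f) =
      D.dunklLaplacian (homogeneousComponent (n + 2) f) := by
  have hcomp (i : ℕ) : homogeneousComponent n (D.dunklLaplacian (homogeneousComponent i f)) =
      if n + 2 = i then D.dunklLaplacian (homogeneousComponent (n + 2) f) else 0 := by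
    obtain hi | ⟨m, rfl⟩ : i < 2 ∨ ∃ m, i = m + 2 :=
      (lt_or_ge i 2).imp_right fun h => ⟨i - 2, by omega⟩
    · rw [D.dunklLaplacian_eq_zero_of_lt_two (homogeneousComponent_isHomogeneous i f) hi, map_zero,
        if_neg (by omega)]
    · rw [homogeneousComponent_of_mem
        (D.dunklLaplacian_isHomogeneous (homogeneousComponent_isHomogeneous (m + 2) f))]
      by_cases hm : n = m <;> simp [hm]
  conv_lhs => rw [← sum_homogeneousComponent f, map_sum, map_sum]
  simp only [hcomp, Finset.sum_ite_eq, Finset.mem_range]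
  split_ifs with h
  · rfl
  · rw [homogeneousComponent_eq_zero _ _ (by omega), map_zero]

lemma dunklLaplacian_homogeneousComponent_eq_zero {f : MvPolynomial ι ℝ}
    (hf : D.dunklLaplacian f = 0) (n : ℕ) : D.dunklLaplacian (homogeneousComponent n f) = 0 := by
  obtain hn | ⟨m, rfl⟩ : n < 2 ∨ ∃ m, n = m + 2 :=
    (lt_or_ge n 2).imp_right fun h => ⟨n - 2, by omega⟩
  · exact D.dunklLaplacian_eq_zero_of_lt_two (homogeneousComponent_isHomogeneous n f) hn
  · rw [← homogeneousComponent_dunklLaplacian, hf, map_zero]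

end Laplacian

section Fischer

variable {ι J : Type*} [Fintype ι] [Fintype J] (D : DunklSystem ι J)

/-- The homogeneous dimension of the Dunkl system, which replaces the dimension of the space in
formulas for homogeneous polynomials. -/
def homDim : ℝ := Fintype.card ι + 2 * ∑ j, D.mult j

lemma one_le_homDim [Nonempty ι] : 1 ≤ D.homDim := by
  have hcard : (1 : ℝ) ≤ Fintype.card ι := by exact_mod_cast Fintype.card_pos
  have hmult : 0 ≤ ∑ j, D.mult j := Finset.sum_nonneg fun j _ => D.mult_nonneg j
  rw [homDim]
  linarith

variable [DecidableEq ι]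

lemma sum_X_mul_dunklOp {f : MvPolynomial ι ℝ} {n : ℕ} (hf : f.IsHomogeneous n) :
    ∑ i, X i * D.dunklOp (Pi.single i 1) f = (n : ℝ) • f + ∑ j, D.mult j • (f - D.reflHom j f) := by
  have hroot (j : J) : ∑ i, (D.mult j * D.root j i) • (X i * D.divDiff j f) =
      D.mult j • (f - D.reflHom j f) := by
    simp only [← linForm_root_mul_divDiff, linForm_apply, Finset.sum_mul, smul_mul_assoc, mul_smul,
      Finset.smul_sum]
  simp only [dunklOp_apply, dirDeriv_single, dotProduct_single_one, mul_add, Finset.mul_sum,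
    mul_smul_comm, Finset.sum_add_distrib, hf.sum_X_mul_pderiv, Nat.cast_smul_eq_nsmul]
  rw [Finset.sum_comm]
  simp only [hroot]

lemma dunklLaplacian_normSqPoly_mul {f : MvPolynomial ι ℝ} {n : ℕ} (hf : f.IsHomogeneous n) :
    D.dunklLaplacian (normSqPoly * f) =
      normSqPoly * D.dunklLaplacian f + (4 * n + 2 * D.homDim) • f := by
  have hcoord (i : ι) : D.dunklLaplacian (X i * X i * f) = X i * X i * D.dunklLaplacian f
      + (4 : ℝ) • (X i * D.dunklOp (Pi.single i 1) f) + (2 : ℝ) • f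
      + (2 : ℝ) • ∑ j, (D.mult j * (D.root j i * D.root j i)) • D.reflHom j f := by
    rw [← linForm_single i, mul_assoc, dunklLaplacian_linForm_mul, dunklLaplacian_linForm_mul,
      dunklOp_linForm_mul, mul_add, mul_smul_comm]
    simp only [dotProduct_single_one, Pi.single_eq_same, one_smul, ← mul_assoc]
    module
  have hroot (j : J) : ∑ i, (D.mult j * (D.root j i * D.root j i)) • D.reflHom j f =
      (2 * D.mult j) • D.reflHom j f := by
    rw [← Finset.sum_smul, ← Finset.mul_sum, ← dotProduct, D.root_dotProduct_self, mul_comm]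
  simp only [normSqPoly, Finset.sum_mul, map_sum, hcoord, Finset.sum_add_distrib,
    ← Finset.smul_sum]
  rw [D.sum_X_mul_dunklOp hf, Finset.sum_comm]
  simp only [hroot]
  simp only [smul_sub, Finset.sum_sub_distrib, mul_smul, ← Finset.smul_sum,
    Finset.sum_const, Finset.card_univ, ← Finset.sum_smul, homDim]
  module

lemma dunklLaplacian_normSqPoly_pow_mul {f : MvPolynomial ι ℝ} {n : ℕ} (hf : f.IsHomogeneous n)
    (m : ℕ) : D.dunklLaplacian (normSqPoly ^ (m + 1) * f) =
      normSqPoly ^ (m + 1) * D.dunklLaplacian f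
        + (2 * (m + 1) * (2 * (n + m) + D.homDim)) • (normSqPoly ^ m * f) := by
  induction m with
  | zero =>
    rw [zero_add, pow_one, pow_zero, one_mul, D.dunklLaplacian_normSqPoly_mul hf]
    push_cast
    module
  | succ m ih =>
    rw [pow_succ', mul_assoc, D.dunklLaplacian_normSqPoly_mul
      ((normSqPoly_isHomogeneous.pow (m + 1)).mul hf), ih, mul_add, mul_smul_comm, ← mul_assoc,
      ← mul_assoc, ← pow_succ', ← pow_succ']
    push_cast
    module

variable [Nonempty ι]

/-- Surjectivity of `q ↦ Δ_κ(|x|² q)` on homogeneous polynomials (the case `j = 0`); the power of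
`|x|²` makes the induction on the degree work. -/
lemma exists_dunklLaplacian_normSqPoly_mul_eq {g : MvPolynomial ι ℝ} {n : ℕ}
    (hg : g.IsHomogeneous n) (j : ℕ) : ∃ q : MvPolynomial ι ℝ, q.IsHomogeneous (2 * j + n) ∧
      D.dunklLaplacian (normSqPoly * q) = normSqPoly ^ j * g := by
  induction n using Nat.strong_induction_on generalizing g j with
  | _ n ih =>
  set c := 2 * (j + 1) * (2 * (n + j) + D.homDim) with hc_def
  have hc : c ≠ 0 := by have := D.one_le_homDim; positivity
  set p := c⁻¹ • (normSqPoly ^ j * g)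
  have hp : p.IsHomogeneous (2 * j + n) :=
    isHomogeneous_smul _ ((normSqPoly_isHomogeneous.pow j).mul hg)
  have hlap : D.dunklLaplacian (normSqPoly * p) =
      c⁻¹ • (normSqPoly ^ (j + 1) * D.dunklLaplacian g) + normSqPoly ^ j * g := by
    rw [mul_smul_comm, ← mul_assoc, ← pow_succ', map_smul,
      D.dunklLaplacian_normSqPoly_pow_mul hg, smul_add, inv_smul_smul₀ hc]
  obtain hn | ⟨m, rfl⟩ : n < 2 ∨ ∃ m, n = m + 2 :=
    (lt_or_ge n 2).imp_right fun h => ⟨n - 2, by omega⟩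
  · exact ⟨p, hp, by
      rw [hlap, D.dunklLaplacian_eq_zero_of_lt_two hg hn, mul_zero, smul_zero, zero_add]⟩
  · obtain ⟨q, hq, hlq⟩ := ih m (by omega) (D.dunklLaplacian_isHomogeneous hg) (j + 1)
    rw [show 2 * (j + 1) + m = 2 * j + (m + 2) by omega] at hq
    exact ⟨p - c⁻¹ • q, hp.sub (isHomogeneous_smul _ hq), by
      rw [mul_sub, map_sub, hlap, mul_smul_comm, map_smul, hlq, add_sub_cancel_left]⟩

theorem fischer_decomposition {f : MvPolynomial ι ℝ} {n : ℕ} (hf : f.IsHomogeneous (n + 2)) :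
    ∃ h q : MvPolynomial ι ℝ, h.IsHomogeneous (n + 2) ∧ D.dunklLaplacian h = 0 ∧
      q.IsHomogeneous n ∧ f = h + normSqPoly * q := by
  obtain ⟨q, hq, hlq⟩ :=
    D.exists_dunklLaplacian_normSqPoly_mul_eq (D.dunklLaplacian_isHomogeneous hf) 0
  rw [mul_zero, zero_add] at hq
  refine ⟨f - normSqPoly * q, q, hf.sub ?_, ?_, hq, (sub_add_cancel _ _).symm⟩
  · exact add_comm n 2 ▸ normSqPoly_isHomogeneous.mul hq
  · rw [map_sub, hlq, pow_zero, one_mul, sub_self]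

lemma exists_harmonic_eval_eq_of_isHomogeneous {f : MvPolynomial ι ℝ} {n : ℕ}
    (hf : f.IsHomogeneous n) :
    ∃ H, D.dunklLaplacian H = 0 ∧ ∀ x : ι → ℝ, x ⬝ᵥ x = 1 → eval x H = eval x f := by
  induction n using Nat.strong_induction_on generalizing f with
  | _ n ih =>
  obtain hn | ⟨m, rfl⟩ : n < 2 ∨ ∃ m, n = m + 2 :=
    (lt_or_ge n 2).imp_right fun h => ⟨n - 2, by omega⟩
  · exact ⟨f, D.dunklLaplacian_eq_zero_of_lt_two hf hn, fun _ _ => rfl⟩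
  · obtain ⟨h, q, -, hh, hq, rfl⟩ := D.fischer_decomposition hf
    obtain ⟨H, hH, hHq⟩ := ih m (by omega) hq
    exact ⟨h + H, by rw [map_add, hh, hH, add_zero], fun x hx => by
      rw [map_add, map_add, hHq x hx, map_mul, eval_normSqPoly, hx, one_mul]⟩

theorem exists_harmonic_eval_eq (f : MvPolynomial ι ℝ) :
    ∃ H, D.dunklLaplacian H = 0 ∧ ∀ x : ι → ℝ, x ⬝ᵥ x = 1 → eval x H = eval x f := by
  choose H hH hHf using fun n =>
    D.exists_harmonic_eval_eq_of_isHomogeneous (homogeneousComponent_isHomogeneous n f)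
  refine ⟨∑ i ∈ Finset.range (f.totalDegree + 1), H i, by simp [hH], fun x hx => ?_⟩
  conv_rhs => rw [← sum_homogeneousComponent f]
  simp only [map_sum, hHf _ x hx]

end Fischer

end DunklSystem

/-! ### Second order conditions at a local maximum -/

section SecondOrder

variable {E : Type*} [NormedAddCommGroup E] [NormedSpace ℝ E] {F G : E → ℝ} {x y v : E}

/-- The second derivative of `F` at `x` in the direction `v`. -/
def secondDirDeriv (F : E → ℝ) (x v : E) : ℝ := fderiv ℝ (fun y => fderiv ℝ F y v) x v

lemma contDiffAt_fderiv_apply (hF : ContDiffAt ℝ 2 F x) (v : E) :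
    ContDiffAt ℝ 1 (fun y => fderiv ℝ F y v) x :=
  (hF.fderiv_right (m := 1) (by norm_num)).clm_apply contDiffAt_const

lemma continuousAt_secondDirDeriv (hF : ContDiffAt ℝ 2 F x) (v : E) :
    ContinuousAt (fun y => secondDirDeriv F y v) x :=
  ((contDiffAt_fderiv_apply hF v).fderiv_right (m := 0) (by norm_num)).continuousAt.clm_apply
    continuousAt_const

lemma secondDirDeriv_add (hF : ContDiffAt ℝ 2 F x) (hG : ContDiffAt ℝ 2 G x) (v : E) :
    secondDirDeriv (F + G) x v = secondDirDeriv F x v + secondDirDeriv G x v := by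
  have hadd : (fun y => fderiv ℝ (F + G) y v) =ᶠ[𝓝 x]
      fun y => fderiv ℝ F y v + fderiv ℝ G y v := by
    filter_upwards [hF.eventually (by simp), hG.eventually (by simp)] with y hFy hGy
    rw [fderiv_add (hFy.differentiableAt two_ne_zero) (hGy.differentiableAt two_ne_zero),
      add_apply]
  rw [secondDirDeriv, hadd.fderiv_eq,
    fderiv_fun_add ((contDiffAt_fderiv_apply hF v).differentiableAt one_ne_zero)
      ((contDiffAt_fderiv_apply hG v).differentiableAt one_ne_zero)]
  rfl

lemma secondDirDeriv_smul (F : E → ℝ) (x : E) (t : ℝ) (v : E) :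
    secondDirDeriv F x (t • v) = t ^ 2 * secondDirDeriv F x v := by
  have hsmul : (fun y => fderiv ℝ F y (t • v)) = t • fun y => fderiv ℝ F y v := by
    ext y; simp
  rw [secondDirDeriv, hsmul, fderiv_const_smul_field, secondDirDeriv]
  simp only [smul_apply, Pi.smul_apply, map_smul, smul_eq_mul]
  ring

lemma hasDerivAt_comp_add_smul {t : ℝ} (hF : DifferentiableAt ℝ F (x + t • v)) :
    HasDerivAt (fun t : ℝ => F (x + t • v)) (fderiv ℝ F (x + t • v) v) t := by
  have hline : HasDerivAt (fun t : ℝ => x + t • v) v t := by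
    simpa using ((hasDerivAt_id t).smul_const v).const_add x
  exact hF.hasFDerivAt.comp_hasDerivAt t hline

lemma exists_sub_eq_fderiv {S : Set E} (hS : Convex ℝ S) (hF : ∀ z ∈ S, DifferentiableAt ℝ F z)
    (hy : y ∈ S) (hyv : y + v ∈ S) :
    ∃ t ∈ Set.Ioo (0 : ℝ) 1, y + t • v ∈ S ∧ F (y + v) - F y = fderiv ℝ F (y + t • v) v := by
  have hmem : ∀ t ∈ Set.Icc (0 : ℝ) 1, y + t • v ∈ S := fun t ht => hS.add_smul_mem hy hyv ht
  obtain ⟨t, ht, h⟩ := exists_hasDerivAt_eq_slope _ _ zero_lt_one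
    (fun t ht => (hasDerivAt_comp_add_smul (hF _ (hmem t ht))).continuousAt.continuousWithinAt)
    (fun t ht => hasDerivAt_comp_add_smul (hF _ (hmem t (Set.Ioo_subset_Icc_self ht))))
  exact ⟨t, ht, hmem t (Set.Ioo_subset_Icc_self ht), by simpa using h.symm⟩

lemma exists_eq_add_fderiv_add_secondDirDeriv {S : Set E} (hS : Convex ℝ S)
    (hF : ∀ z ∈ S, ContDiffAt ℝ 2 F z) (hy : y ∈ S) (hyv : y + v ∈ S) :
    ∃ w ∈ S, ∃ t ∈ Set.Ioo (0 : ℝ) 1,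
      F (y + v) = F y + fderiv ℝ F y v + t * secondDirDeriv F w v := by
  obtain ⟨t, ht, hz, hFz⟩ := exists_sub_eq_fderiv hS
    (fun z hz => (hF z hz).differentiableAt two_ne_zero) hy hyv
  obtain ⟨s, -, hw, hFw⟩ := exists_sub_eq_fderiv hS (fun z hz =>
    (contDiffAt_fderiv_apply (hF z hz) v).differentiableAt one_ne_zero) hy hz
  rw [map_smul, smul_eq_mul] at hFw
  exact ⟨_, hw, t, ht, by rw [secondDirDeriv]; linarith⟩

lemma secondDirDeriv_nonpos_of_isLocalMax (hF : ContDiffAt ℝ 2 F x) (hmax : IsLocalMax F x)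
    (v : E) :
    secondDirDeriv F x v ≤ 0 := by
  by_contra! hpos
  have hev : ∀ᶠ y in 𝓝 x, ContDiffAt ℝ 2 F y ∧ 0 < secondDirDeriv F y v ∧ F y ≤ F x :=
    (hF.eventually (by simp)).and
      (((continuousAt_secondDirDeriv hF v).eventually_const_lt hpos).and hmax)
  obtain ⟨r, hr, hball⟩ := Metric.eventually_nhds_iff_ball.1 hev
  have hlim : Tendsto (fun t : ℝ => x + t • v) (𝓝[>] 0) (𝓝 x) := by
    have hcont : Continuous fun t : ℝ => x + t • v := by fun_prop
    simpa using (hcont.tendsto 0).mono_left nhdsWithin_le_nhds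
  obtain ⟨t, hxt, ht⟩ :=
    ((hlim.eventually (ball_mem_nhds x hr)).and self_mem_nhdsWithin).exists
  obtain ⟨w, hw, s, hs, htaylor⟩ := exists_eq_add_fderiv_add_secondDirDeriv (convex_ball x r)
    (fun z hz => (hball z hz).1) (mem_ball_self hr) hxt
  rw [hmax.fderiv_eq_zero, secondDirDeriv_smul] at htaylor
  have hsecond : 0 < s * (t ^ 2 * secondDirDeriv F w v) :=
    mul_pos hs.1 (mul_pos (pow_pos ht 2) (hball w hw).2.1)
  have hle := (hball _ hxt).2.2
  simp only [zero_apply] at htaylor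
  linarith

end SecondOrder

/-! ### The Dunkl Laplacian of a `C²` function and the maximum principle -/

section PolynomialFunctions

variable {ι : Type*} [Fintype ι]

lemma contDiff_eval (f : MvPolynomial ι ℝ) {n : WithTop ℕ∞} :
    ContDiff ℝ n fun x : ι → ℝ => eval x f :=
  (AnalyticOnNhd.eval_mvPolynomial f).contDiff

lemma fderiv_eval (f : MvPolynomial ι ℝ) (x v : ι → ℝ) :
    fderiv ℝ (fun y => eval y f) x v = eval x (dirDeriv v f) := by
  classical
  have hdiff (g : MvPolynomial ι ℝ) : DifferentiableAt ℝ (fun y : ι → ℝ => eval y g) x :=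
    (contDiff_eval g).differentiable one_ne_zero x
  induction f using MvPolynomial.induction_on with
  | C c => simp [← algebraMap_eq]
  | add f g hf hg => simp [fderiv_fun_add (hdiff f) (hdiff g), hf, hg]
  | mul_X f i hf =>
    have hmul : fderiv ℝ (fun y : ι → ℝ => eval y f * y i) x v =
        eval x f * v i + x i * eval x (dirDeriv v f) := by
      simp [fderiv_fun_mul (hdiff f) (differentiableAt_apply i x), hf,
        (hasFDerivAt_apply (𝕜 := ℝ) i x).fderiv]
    simp only [map_mul, hmul, Derivation.leibniz, map_add, smul_eq_mul, ← linForm_single i,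
      dirDeriv_linForm, eval_C, dotProduct_single_one, eval_linForm, single_one_dotProduct]

lemma secondDirDeriv_eval (f : MvPolynomial ι ℝ) (x v : ι → ℝ) :
    secondDirDeriv (fun y => eval y f) x v = eval x (dirDeriv v (dirDeriv v f)) := by
  simp only [secondDirDeriv, fderiv_eval]

lemma continuous_dotProduct_const (v : ι → ℝ) : Continuous fun x : ι → ℝ => v ⬝ᵥ x :=
  continuous_const.dotProduct continuous_id

lemma continuous_dotProduct_self : Continuous fun x : ι → ℝ => x ⬝ᵥ x :=
  continuous_id.dotProduct continuous_id

lemma isCompact_setOf_dotProduct_self_le_one : IsCompact {x : ι → ℝ | x ⬝ᵥ x ≤ 1} := by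
  refine isCompact_of_isClosed_isBounded
    (isClosed_le continuous_dotProduct_self continuous_const)
    ((isBounded_closedBall (x := (0 : ι → ℝ)) (r := 1)).subset fun x (hx : x ⬝ᵥ x ≤ 1) => ?_)
  rw [mem_closedBall_zero_iff, pi_norm_le_iff_of_nonneg zero_le_one]
  intro i
  rw [Real.norm_eq_abs, abs_le_one_iff_mul_self_le_one]
  exact (Finset.single_le_sum (f := fun i => x i * x i) (fun i _ => mul_self_nonneg _)
    (Finset.mem_univ i)).trans hx

end PolynomialFunctions

namespace DunklSystem

variable {ι J : Type*} [Fintype ι] (D : DunklSystem ι J)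

/-- The contribution of one root to the Dunkl Laplacian of a function. -/
def rootTerm (j : J) (F : (ι → ℝ) → ℝ) (x : ι → ℝ) : ℝ :=
  fderiv ℝ F x (D.root j) / (D.root j ⬝ᵥ x) - (F x - F (D.reflection j x)) / (D.root j ⬝ᵥ x) ^ 2

/-- Regular points: those on no reflecting hyperplane. -/
def IsRegular (x : ι → ℝ) : Prop := ∀ j, D.root j ⬝ᵥ x ≠ 0

lemma rootTerm_add {F G : (ι → ℝ) → ℝ} {x : ι → ℝ} (hF : DifferentiableAt ℝ F x)
    (hG : DifferentiableAt ℝ G x) (j : J) :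
    D.rootTerm j (F + G) x = D.rootTerm j F x + D.rootTerm j G x := by
  simp only [rootTerm, fderiv_add hF hG, Pi.add_apply, add_apply]
  ring

lemma rootTerm_eval_linForm_mul {j : J} {x : ι → ℝ} (hx : D.root j ⬝ᵥ x ≠ 0) (w : ι → ℝ)
    (f : MvPolynomial ι ℝ) : D.rootTerm j (fun y => eval y (linForm w * f)) x =
      w ⬝ᵥ x * D.rootTerm j (fun y => eval y f) x + D.root j ⬝ᵥ w * eval x (D.divDiff j f) := by
  have hdiv : D.root j ⬝ᵥ x * eval x (D.divDiff j f) = eval x f - eval (D.reflection j x) f := by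
    rw [← eval_linForm, ← map_mul, linForm_root_mul_divDiff, map_sub, eval_reflHom]
  simp only [rootTerm, fderiv_eval]
  simp only [Derivation.leibniz, dirDeriv_linForm, smul_eq_mul, map_add, map_mul, eval_linForm,
    eval_C, D.reflection_apply j x, dotProduct_sub, dotProduct_smul, dotProduct_comm w (D.root j)]
  rw [D.reflection_apply] at hdiv
  field_simp
  linear_combination (-(D.root j ⬝ᵥ w) * (D.root j ⬝ᵥ x)) * hdiv

/-- The reflected value is expanded at second order along the segment from `y` to its mirror
image. -/
lemma exists_rootTerm_eq {S : Set (ι → ℝ)} (hS : Convex ℝ S) {F : (ι → ℝ) → ℝ}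
    (hF : ∀ z ∈ S, ContDiffAt ℝ 2 F z) {j : J} {y : ι → ℝ} (hy : y ∈ S)
    (hrefl : D.reflection j y ∈ S) (hy0 : D.root j ⬝ᵥ y ≠ 0) : ∃ w ∈ S, ∃ t ∈ Set.Ioo (0 : ℝ) 1,
      D.rootTerm j F y = t * secondDirDeriv F w (D.root j) := by
  have hadd : D.reflection j y = y + -(D.root j ⬝ᵥ y) • D.root j := by
    rw [reflection_apply, neg_smul, sub_eq_add_neg]
  rw [hadd] at hrefl
  obtain ⟨w, hw, t, ht, h⟩ := exists_eq_add_fderiv_add_secondDirDeriv hS hF hy hrefl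
  refine ⟨w, hw, t, ht, ?_⟩
  rw [rootTerm, hadd, h, map_smul, secondDirDeriv_smul, smul_eq_mul]
  field_simp
  ring

lemma eventually_rootTerm_le {F : (ι → ℝ) → ℝ} {x : ι → ℝ} {j : J} {δ : ℝ}
    (hF : ContDiffAt ℝ 2 F x) (hFr : ContinuousAt F (D.reflection j x)) (hmax : IsLocalMax F x)
    (hrefl : F (D.reflection j x) ≤ F x) (hδ : 0 < δ) :
    ∀ᶠ y in 𝓝 x, D.root j ⬝ᵥ y ≠ 0 → D.rootTerm j F y ≤ δ := by
  have hrc : ContinuousAt (D.reflection j) x :=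
    (D.reflection j).continuous_of_finiteDimensional.continuousAt
  by_cases hj : D.root j ⬝ᵥ x = 0
  · have hev : ∀ᶠ z in 𝓝 x, ContDiffAt ℝ 2 F z ∧ secondDirDeriv F z (D.root j) < δ :=
      (hF.eventually (by simp)).and ((continuousAt_secondDirDeriv hF _).eventually_lt_const
        ((secondDirDeriv_nonpos_of_isLocalMax hF hmax _).trans_lt hδ))
    obtain ⟨r, hr, hball⟩ := Metric.eventually_nhds_iff_ball.1 hev
    have hfix : D.reflection j x = x := by rw [reflection_apply, hj, zero_smul, sub_zero]
    rw [ContinuousAt, hfix] at hrc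
    filter_upwards [ball_mem_nhds x hr, hrc.eventually (ball_mem_nhds x hr)] with y hy hry hy0
    obtain ⟨w, hw, t, ht, h⟩ := D.exists_rootTerm_eq (convex_ball x r)
      (fun z hz => (hball z hz).1) hy hry hy0
    rw [h]
    nlinarith [ht.1, ht.2, (hball w hw).2]
  · have hcont : ContinuousAt (D.rootTerm j F) x := by
      have hdot := (continuous_dotProduct_const (D.root j)).continuousAt (x := x)
      exact ((contDiffAt_fderiv_apply hF _).continuousAt.div hdot hj).sub
        ((hF.continuousAt.sub (hFr.comp hrc)).div (hdot.pow 2) (pow_ne_zero 2 hj))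
    have hle : D.rootTerm j F x ≤ 0 := by
      rw [rootTerm, hmax.fderiv_eq_zero, zero_apply, zero_div, zero_sub, neg_nonpos]
      exact div_nonneg (sub_nonneg.2 hrefl) (sq_nonneg _)
    filter_upwards [hcont.eventually_lt_const (hle.trans_lt hδ)] with y hy _ using hy.le

lemma dense_setOf_isRegular [Finite J] : Dense {x | D.IsRegular x} := by
  have hset : {x | D.IsRegular x} = ⋂ j, {x | D.root j ⬝ᵥ x ≠ 0} := by
    ext x; simp [IsRegular]
  rw [hset]
  refine dense_iInter_of_isOpen (fun j => isOpen_ne_fun (continuous_dotProduct_const _)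
    continuous_const) fun j x => ?_
  by_cases hx : D.root j ⬝ᵥ x = 0
  · have hlim : Tendsto (fun t : ℝ => x + t • D.root j) (𝓝[≠] 0) (𝓝 x) := by
      have hcont : Continuous fun t : ℝ => x + t • D.root j := by fun_prop
      simpa using (hcont.tendsto 0).mono_left nhdsWithin_le_nhds
    refine mem_closure_of_tendsto hlim ?_
    filter_upwards [self_mem_nhdsWithin] with t ht
    simpa [dotProduct_add, dotProduct_smul, D.root_dotProduct_self, hx] using ht
  · exact subset_closure hx

variable [Fintype J] [DecidableEq ι]

/-- The Dunkl Laplacian of a function, meaningful at regular points. The factor `2 * mult` is `κ`,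
each positive root being counted twice. -/
def dunklLaplacianFun (F : (ι → ℝ) → ℝ) (x : ι → ℝ) : ℝ :=
  ∑ i, secondDirDeriv F x (Pi.single i 1) + ∑ j, 2 * D.mult j * D.rootTerm j F x

lemma dunklLaplacianFun_add {F G : (ι → ℝ) → ℝ} {x : ι → ℝ} (hF : ContDiffAt ℝ 2 F x)
    (hG : ContDiffAt ℝ 2 G x) :
    D.dunklLaplacianFun (F + G) x = D.dunklLaplacianFun F x + D.dunklLaplacianFun G x := by
  simp only [dunklLaplacianFun, secondDirDeriv_add hF hG, mul_add, Finset.sum_add_distrib,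
    D.rootTerm_add (hF.differentiableAt two_ne_zero) (hG.differentiableAt two_ne_zero)]
  ring

lemma dunklLaplacianFun_eval_linForm_mul {x : ι → ℝ} (hx : D.IsRegular x) (w : ι → ℝ)
    (f : MvPolynomial ι ℝ) : D.dunklLaplacianFun (fun y => eval y (linForm w * f)) x =
      w ⬝ᵥ x * D.dunklLaplacianFun (fun y => eval y f) x + 2 * eval x (D.dunklOp w f) := by
  have hsecond (v : ι → ℝ) : dirDeriv v (dirDeriv v (linForm w * f)) =
      linForm w * dirDeriv v (dirDeriv v f) + (2 : ℝ) • (v ⬝ᵥ w) • dirDeriv v f := by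
    simp only [Derivation.leibniz, dirDeriv_linForm, smul_eq_mul, map_add, derivation_C, mul_zero,
      smul_eq_C_mul, map_ofNat]
    ring
  have hdir : ∑ i, w i * eval x (dirDeriv (Pi.single i 1) f) = eval x (dirDeriv w f) := by
    simp only [dirDeriv_single]
    simp only [dirDeriv_apply, map_sum, smul_eval]
  simp only [dunklLaplacianFun, secondDirDeriv_eval, hsecond, D.rootTerm_eval_linForm_mul (hx _)]
  simp only [map_add, map_mul, eval_linForm, smul_eval, single_one_dotProduct,
    Finset.sum_add_distrib, mul_add, mul_assoc, mul_left_comm _ (w ⬝ᵥ x), ← Finset.mul_sum, hdir,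
    dunklOp_apply, map_sum]
  ring

lemma dunklLaplacianFun_eval (f : MvPolynomial ι ℝ) {x : ι → ℝ} (hx : D.IsRegular x) :
    D.dunklLaplacianFun (fun y => eval y f) x = eval x (D.dunklLaplacian f) := by
  induction f using MvPolynomial.induction_on with
  | C c =>
    rw [D.dunklLaplacian_eq_zero_of_lt_two (isHomogeneous_C ι c) two_pos]
    simp [dunklLaplacianFun, rootTerm, secondDirDeriv]
  | add f g hf hg =>
    simp only [map_add, ← hf, ← hg]
    exact D.dunklLaplacianFun_add (contDiff_eval f).contDiffAt (contDiff_eval g).contDiffAt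
  | mul_X f i hf =>
    rw [mul_comm, ← linForm_single, D.dunklLaplacianFun_eval_linForm_mul hx, hf,
      dunklLaplacian_linForm_mul, map_add, map_mul, eval_linForm, smul_eval]

/-- The local maximum may lie on a reflecting hyperplane, where `dunklLaplacianFun` itself is
meaningless, so the bound is formulated at nearby regular points. -/
lemma eventually_dunklLaplacianFun_le {F : (ι → ℝ) → ℝ} {x : ι → ℝ} {η : ℝ}
    (hF : ContDiffAt ℝ 2 F x) (hFr : ∀ j, ContinuousAt F (D.reflection j x))
    (hmax : IsLocalMax F x) (hrefl : ∀ j, F (D.reflection j x) ≤ F x) (hη : 0 < η) :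
    ∀ᶠ y in 𝓝 x, D.IsRegular y → D.dunklLaplacianFun F y ≤ η := by
  obtain ⟨δ, hδ, hδη⟩ : ∃ δ > 0, D.homDim * δ < η := by
    have hlim : Tendsto (fun δ => D.homDim * δ) (𝓝[>] 0) (𝓝 0) := by
      simpa using ((continuous_const_mul D.homDim).tendsto 0).mono_left nhdsWithin_le_nhds
    exact ((hlim.eventually (gt_mem_nhds hη)).and self_mem_nhdsWithin).exists.imp fun _ h => h.symm
  have hsecond (i : ι) : ∀ᶠ y in 𝓝 x, secondDirDeriv F y (Pi.single i 1) ≤ δ :=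
    ((continuousAt_secondDirDeriv hF _).eventually_lt_const
      ((secondDirDeriv_nonpos_of_isLocalMax hF hmax _).trans_lt hδ)).mono fun _ h => h.le
  filter_upwards [eventually_all.2 hsecond, eventually_all.2 fun j =>
    D.eventually_rootTerm_le hF (hFr j) hmax (hrefl j) hδ] with y hsec hroot hreg
  have hmult (j : J) : 2 * D.mult j * D.rootTerm j F y ≤ 2 * D.mult j * δ :=
    mul_le_mul_of_nonneg_left (hroot j (hreg j)) (mul_nonneg zero_le_two (D.mult_nonneg j))
  calc D.dunklLaplacianFun F y ≤ ∑ _i : ι, δ + ∑ j, 2 * D.mult j * δ :=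
        add_le_add (Finset.sum_le_sum fun i _ => hsec i) (Finset.sum_le_sum fun j _ => hmult j)
    _ = D.homDim * δ := by
        rw [Finset.sum_const, Finset.card_univ, nsmul_eq_mul, ← Finset.sum_mul, ← Finset.mul_sum,
          homDim, add_mul]
    _ ≤ η := hδη.le

lemma le_of_forall_le_dunklLaplacianFun {F : (ι → ℝ) → ℝ} {m η : ℝ} (hη : 0 < η)
    (hc : ContinuousOn F {x | x ⬝ᵥ x ≤ 1}) (h2 : ∀ x, x ⬝ᵥ x < 1 → ContDiffAt ℝ 2 F x)
    (hL : ∀ x, x ⬝ᵥ x < 1 → D.IsRegular x → η ≤ D.dunklLaplacianFun F x)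
    (hm : ∀ x, x ⬝ᵥ x = 1 → F x ≤ m) {x : ι → ℝ} (hx : x ⬝ᵥ x ≤ 1) : F x ≤ m := by
  obtain ⟨z, hz, hzmax⟩ := isCompact_setOf_dotProduct_self_le_one.exists_isMaxOn ⟨x, hx⟩ hc
  suffices hz1 : z ⬝ᵥ z = 1 from (hzmax hx).trans (hm z hz1)
  refine le_antisymm hz (le_of_not_gt fun hlt => ?_)
  have hnhds {y : ι → ℝ} (hy : y ⬝ᵥ y < 1) : {x : ι → ℝ | x ⬝ᵥ x < 1} ∈ 𝓝 y :=
    (isOpen_lt continuous_dotProduct_self continuous_const).mem_nhds hy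
  have hle {y : ι → ℝ} (hy : y ⬝ᵥ y < 1) : F y ≤ F z := hzmax hy.le
  have hrefl (j : J) : D.reflection j z ⬝ᵥ D.reflection j z < 1 := by
    rwa [reflection_dotProduct_reflection]
  have hbound := D.eventually_dunklLaplacianFun_le (h2 z hlt)
    (fun j => (h2 _ (hrefl j)).continuousAt) (mem_of_superset (hnhds hlt) fun _ => hle)
    (fun j => hle (hrefl j)) (half_pos hη)
  obtain ⟨y, ⟨hy, hy1⟩, hreg⟩ :=
    mem_closure_iff_nhds.1 (D.dense_setOf_isRegular z) _ (hbound.and (hnhds hlt))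
  linarith [hy hreg, hL y hy1 hreg]

variable [Nonempty ι]

theorem le_of_dunklLaplacianFun_nonneg {F : (ι → ℝ) → ℝ} {m : ℝ}
    (hc : ContinuousOn F {x | x ⬝ᵥ x ≤ 1}) (h2 : ∀ x, x ⬝ᵥ x < 1 → ContDiffAt ℝ 2 F x)
    (hL : ∀ x, x ⬝ᵥ x < 1 → D.IsRegular x → 0 ≤ D.dunklLaplacianFun F x)
    (hm : ∀ x, x ⬝ᵥ x = 1 → F x ≤ m) {x : ι → ℝ} (hx : x ⬝ᵥ x ≤ 1) : F x ≤ m := by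
  refine le_of_forall_pos_le_add fun ε hε => ?_
  have hlap : D.dunklLaplacian (ε • normSqPoly) = C (ε * (2 * D.homDim)) := by
    have h := D.dunklLaplacian_normSqPoly_mul (isHomogeneous_one ι ℝ)
    rw [mul_one, dunklLaplacian_one, mul_zero, zero_add, Nat.cast_zero, mul_zero, zero_add] at h
    rw [map_smul, h, smul_smul, smul_eq_C_mul, mul_one]
  have hpos : 0 < ε * (2 * D.homDim) := mul_pos hε (by linarith [D.one_le_homDim])
  have heval (y : ι → ℝ) : eval y (ε • normSqPoly) = ε * (y ⬝ᵥ y) := by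
    rw [smul_eval, eval_normSqPoly]
  have hq := contDiff_eval (n := 2) (ε • normSqPoly : MvPolynomial ι ℝ)
  have hG := D.le_of_forall_le_dunklLaplacianFun (F := F + fun y => eval y (ε • normSqPoly))
    (m := m + ε) hpos (hc.add hq.continuous.continuousOn)
    (fun y hy => (h2 y hy).add hq.contDiffAt) (fun y hy hreg => ?_) (fun y hy => ?_) hx
  · rw [Pi.add_apply, heval] at hG
    have hxx : 0 ≤ x ⬝ᵥ x := dotProduct_self_star_nonneg x
    linarith [mul_nonneg hε.le hxx]
  · rw [D.dunklLaplacianFun_add (h2 y hy) hq.contDiffAt, D.dunklLaplacianFun_eval _ hreg, hlap,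
      eval_C]
    linarith [hL y hy hreg]
  · rw [Pi.add_apply, heval, hy, mul_one]
    exact add_le_add_left (hm y hy) ε

lemma eval_zero_nonneg_of_harmonic {H : MvPolynomial ι ℝ} (hH : D.dunklLaplacian H = 0)
    (hS : ∀ x : ι → ℝ, x ⬝ᵥ x = 1 → 0 ≤ eval x H) : 0 ≤ eval 0 H := by
  have h := D.le_of_dunklLaplacianFun_nonneg (F := fun x => eval x (-H)) (m := 0) (x := 0)
    (contDiff_eval (n := 2) _).continuous.continuousOn (fun x _ => (contDiff_eval _).contDiffAt)
    (fun x _ hx => by rw [D.dunklLaplacianFun_eval _ hx, map_neg, hH, neg_zero, map_zero])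
    (fun x hx => by simpa using hS x hx) (by simp)
  simpa using h

end DunklSystem

/-! ### Means over the sphere -/

namespace DunklSystem

variable {ι J : Type*} [Fintype ι] (D : DunklSystem ι J)

lemma reflHom_divDiff_mul_sub (j : J) (f g : MvPolynomial ι ℝ) :
    D.reflHom j (D.divDiff j f * (g - D.reflHom j g)) = -(D.divDiff j f * (g - D.reflHom j g)) := by
  rw [map_mul, reflHom_divDiff, map_sub, reflHom_reflHom, ← mul_neg, neg_sub]

lemma dunklOp_normSqPoly_mul [Fintype J] (v : ι → ℝ) (f : MvPolynomial ι ℝ) :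
    D.dunklOp v (normSqPoly * f) = normSqPoly * D.dunklOp v f + (2 : ℝ) • (linForm v * f) := by
  have hdiv (j : J) : D.divDiff j normSqPoly = 0 := D.divDiff_eq <| by
    rw [mul_zero, eq_comm, sub_eq_zero]
    refine MvPolynomial.funext fun x => ?_
    rw [eval_reflHom, eval_normSqPoly, eval_normSqPoly, reflection_dotProduct_reflection]
  have hderiv : dirDeriv v normSqPoly = (2 : ℝ) • linForm v := by
    classical
    have hX (i : ι) : dirDeriv v (X i) = C (v i) := by
      rw [← linForm_single, dirDeriv_linForm, dotProduct_single_one]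
    simp only [normSqPoly, map_sum, Derivation.leibniz, hX, linForm_apply, smul_eq_mul, ← two_mul,
      ← Finset.mul_sum, smul_eq_C_mul, map_ofNat, mul_comm]
  rw [dunklOp_mul, D.dunklOp_apply v normSqPoly]
  simp only [hdiv, hderiv, smul_zero, Finset.sum_const_zero, zero_mul, sub_zero, add_zero,
    smul_mul_assoc]

variable [Fintype J] [DecidableEq ι] [Nonempty ι]

lemma eval_zero_eq_of_harmonic {H K : MvPolynomial ι ℝ} (hH : D.dunklLaplacian H = 0)
    (hK : D.dunklLaplacian K = 0) (h : ∀ x : ι → ℝ, x ⬝ᵥ x = 1 → eval x H = eval x K) :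
    eval 0 H = eval 0 K := by
  have hle {P Q : MvPolynomial ι ℝ} (hP : D.dunklLaplacian P = 0) (hQ : D.dunklLaplacian Q = 0)
      (hPQ : ∀ x : ι → ℝ, x ⬝ᵥ x = 1 → eval x P = eval x Q) : eval 0 P ≤ eval 0 Q := by
    rw [← sub_nonneg, ← map_sub]
    exact D.eval_zero_nonneg_of_harmonic (by rw [map_sub, hP, hQ, sub_zero])
      fun x hx => by rw [map_sub, hPQ x hx, sub_self]
  exact le_antisymm (hle hH hK h) (hle hK hH fun x hx => (h x hx).symm)

/-- The mean of a polynomial over the unit sphere with respect to the weighted surface measure of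
the Dunkl system, encoded as the value at the centre of its harmonic extension. -/
def sphereMean : MvPolynomial ι ℝ →ₗ[ℝ] ℝ where
  toFun f := eval 0 (D.exists_harmonic_eval_eq f).choose
  map_add' f g := by
    have hf := (D.exists_harmonic_eval_eq f).choose_spec
    have hg := (D.exists_harmonic_eval_eq g).choose_spec
    have hfg := (D.exists_harmonic_eval_eq (f + g)).choose_spec
    rw [← map_add]
    exact D.eval_zero_eq_of_harmonic hfg.1 (by rw [map_add, hf.1, hg.1, add_zero])
      fun x hx => by rw [hfg.2 x hx, map_add, map_add, hf.2 x hx, hg.2 x hx]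
  map_smul' c f := by
    have hf := (D.exists_harmonic_eval_eq f).choose_spec
    have hcf := (D.exists_harmonic_eval_eq (c • f)).choose_spec
    rw [RingHom.id_apply, smul_eq_mul, ← smul_eval]
    exact D.eval_zero_eq_of_harmonic hcf.1 (by rw [map_smul, hf.1, smul_zero])
      fun x hx => by rw [hcf.2 x hx, smul_eval, smul_eval, hf.2 x hx]

variable {f g : MvPolynomial ι ℝ} {n m : ℕ}

lemma sphereMean_eq_eval_zero {H : MvPolynomial ι ℝ} (hH : D.dunklLaplacian H = 0)
    (h : ∀ x : ι → ℝ, x ⬝ᵥ x = 1 → eval x H = eval x f) : D.sphereMean f = eval 0 H :=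
  have hf := (D.exists_harmonic_eval_eq f).choose_spec
  D.eval_zero_eq_of_harmonic hf.1 hH fun x hx => by rw [hf.2 x hx, h x hx]

lemma sphereMean_of_harmonic (hf : D.dunklLaplacian f = 0) : D.sphereMean f = eval 0 f :=
  D.sphereMean_eq_eval_zero hf fun _ _ => rfl

lemma sphereMean_one : D.sphereMean 1 = 1 := by
  rw [D.sphereMean_of_harmonic D.dunklLaplacian_one, map_one]

lemma sphereMean_mono (h : ∀ x : ι → ℝ, x ⬝ᵥ x = 1 → eval x f ≤ eval x g) :
    D.sphereMean f ≤ D.sphereMean g := by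
  obtain ⟨H, hH, hHfg⟩ := D.exists_harmonic_eval_eq (g - f)
  rw [← sub_nonneg, ← map_sub, D.sphereMean_eq_eval_zero hH hHfg]
  exact D.eval_zero_nonneg_of_harmonic hH fun x hx => by
    rw [hHfg x hx, map_sub]
    exact sub_nonneg.2 (h x hx)

lemma sphereMean_nonneg (h : ∀ x : ι → ℝ, x ⬝ᵥ x = 1 → 0 ≤ eval x f) : 0 ≤ D.sphereMean f :=
  D.sphereMean.map_zero ▸ D.sphereMean_mono fun x hx => (map_zero (eval x)).symm ▸ h x hx

lemma sphereMean_normSqPoly_mul (f : MvPolynomial ι ℝ) :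
    D.sphereMean (normSqPoly * f) = D.sphereMean f := by
  have h (x : ι → ℝ) (hx : x ⬝ᵥ x = 1) : eval x (normSqPoly * f) = eval x f := by
    rw [map_mul, eval_normSqPoly, hx, one_mul]
  exact le_antisymm (D.sphereMean_mono fun x hx => (h x hx).le)
    (D.sphereMean_mono fun x hx => (h x hx).ge)

lemma sphereMean_reflHom (j : J) (f : MvPolynomial ι ℝ) :
    D.sphereMean (D.reflHom j f) = D.sphereMean f := by
  obtain ⟨H, hH, hHf⟩ := D.exists_harmonic_eval_eq f
  have hrefl : D.dunklLaplacian (D.reflHom j H) = 0 := by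
    rw [← reflHom_dunklLaplacian, hH, map_zero]
  rw [D.sphereMean_eq_eval_zero hH hHf, D.sphereMean_eq_eval_zero hrefl fun x hx => ?_,
    eval_reflHom, map_zero]
  rw [eval_reflHom, eval_reflHom, hHf _ (by rw [reflection_dotProduct_reflection, hx])]

lemma sphereMean_reflHom_mul (j : J) (f g : MvPolynomial ι ℝ) :
    D.sphereMean (D.reflHom j f * g) = D.sphereMean (f * D.reflHom j g) := by
  rw [← D.sphereMean_reflHom j, map_mul, reflHom_reflHom]

lemma sphereMean_divDiff_mul_sub (j : J) (f g : MvPolynomial ι ℝ) :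
    D.sphereMean (D.divDiff j f * (g - D.reflHom j g)) = 0 := by
  have h := D.sphereMean_reflHom j (D.divDiff j f * (g - D.reflHom j g))
  rw [reflHom_divDiff_mul_sub, map_neg] at h
  linarith

lemma sphereMean_eq_zero_of_harmonic (hf : f.IsHomogeneous n) (hn : n ≠ 0)
    (hlap : D.dunklLaplacian f = 0) : D.sphereMean f = 0 := by
  rw [D.sphereMean_of_harmonic hlap, eval_zero, constantCoeff_eq]
  exact hf.coeff_eq_zero (by simpa using hn.symm)

lemma sphereMean_dunklOp_of_harmonic (hf : f.IsHomogeneous (n + 1)) (hlap : D.dunklLaplacian f = 0)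
    (v : ι → ℝ) :
    D.sphereMean (D.dunklOp v f) = (n + D.homDim) * D.sphereMean (linForm v * f) := by
  set c := 4 * n + 2 * D.homDim with hc_def
  have hc : c ≠ 0 := by have := D.one_le_homDim; positivity
  have hT := D.dunklOp_isHomogeneous v hf
  have hTlap : D.dunklLaplacian (D.dunklOp v f) = 0 := by
    rw [← dunklOp_dunklLaplacian, hlap, map_zero]
  have hharm : D.dunklLaplacian (linForm v * f - (2 / c) • (normSqPoly * D.dunklOp v f)) = 0 := by
    rw [map_sub, map_smul, dunklLaplacian_linForm_mul, D.dunklLaplacian_normSqPoly_mul hT, hlap,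
      hTlap, mul_zero, mul_zero, zero_add, zero_add, smul_smul, div_mul_cancel₀ _ hc, sub_self]
  have hmean : D.sphereMean (linForm v * f) = 2 / c * D.sphereMean (D.dunklOp v f) := by
    have h := D.sphereMean_eq_zero_of_harmonic (n := n + 2)
      (((add_comm 1 (n + 1) ▸ (linForm_isHomogeneous v).mul hf)).sub
        (isHomogeneous_smul _ (add_comm 2 n ▸ normSqPoly_isHomogeneous.mul hT))) (by omega) hharm
    rwa [map_sub, map_smul, sphereMean_normSqPoly_mul, smul_eq_mul, sub_eq_zero] at h
  rw [hmean]
  rcases n.eq_zero_or_pos with rfl | hn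
  · have hdim : D.homDim ≠ 0 := (zero_lt_one.trans_le D.one_le_homDim).ne'
    rw [hc_def, Nat.cast_zero]
    field_simp
    ring
  · rw [D.sphereMean_eq_zero_of_harmonic hT hn.ne' hTlap, mul_zero, mul_zero]

/-- Integration by parts over the unit sphere. -/
theorem sphereMean_dunklOp (hf : f.IsHomogeneous n) (v : ι → ℝ) :
    D.sphereMean (D.dunklOp v f) = (n + D.homDim - 1) * D.sphereMean (linForm v * f) := by
  induction n using Nat.strong_induction_on generalizing f with
  | _ n ih =>
  match n with
  | 0 =>
    have hlin := (linForm_isHomogeneous v).mul hf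
    rw [D.dunklOp_eq_zero _ hf, map_zero, D.sphereMean_eq_zero_of_harmonic hlin one_ne_zero
      (D.dunklLaplacian_eq_zero_of_lt_two hlin one_lt_two), mul_zero]
  | 1 =>
    rw [D.sphereMean_dunklOp_of_harmonic (n := 0) hf
      (D.dunklLaplacian_eq_zero_of_lt_two hf one_lt_two)]
    push_cast
    ring
  | k + 2 =>
    obtain ⟨h, q, hh, hlap, hq, rfl⟩ := D.fischer_decomposition hf
    rw [map_add, map_add, D.sphereMean_dunklOp_of_harmonic hh hlap, dunklOp_normSqPoly_mul, map_add,
      map_smul, sphereMean_normSqPoly_mul, ih k (by omega) hq, mul_add, map_add,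
      mul_left_comm (linForm v), sphereMean_normSqPoly_mul, smul_eq_mul]
    push_cast
    ring

lemma sphereMean_sum_dunklOp_mul_dunklOp (hf : f.IsHomogeneous (n + 1)) (hg : g.IsHomogeneous m)
    (hlap : D.dunklLaplacian f = 0) :
    D.sphereMean (∑ i, D.dunklOp (Pi.single i 1) f * D.dunklOp (Pi.single i 1) g) =
      (n + m + D.homDim - 1) * ((n + 1) * D.sphereMean (f * g) +
        ∑ j, D.mult j * (D.sphereMean (f * g) - D.sphereMean (D.reflHom j f * g))) := by
  have hparts (i : ι) : D.sphereMean (D.dunklOp (Pi.single i 1) f * D.dunklOp (Pi.single i 1) g) +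
      D.sphereMean (D.dunklOp (Pi.single i 1) (D.dunklOp (Pi.single i 1) f) * g) =
      (n + m + D.homDim - 1) * D.sphereMean (X i * D.dunklOp (Pi.single i 1) f * g) := by
    have h := D.sphereMean_dunklOp ((D.dunklOp_isHomogeneous (Pi.single i 1) hf).mul hg)
      (Pi.single i 1)
    simpa only [dunklOp_mul, map_sub, map_add, map_sum, map_smul, sphereMean_divDiff_mul_sub,
      smul_zero, Finset.sum_const_zero, sub_zero, linForm_single, ← mul_assoc, Nat.cast_add] using h
  have hsum := Finset.sum_congr rfl fun i (_ : i ∈ Finset.univ) => hparts i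
  rw [Finset.sum_add_distrib, ← map_sum, ← map_sum, ← Finset.sum_mul, ← dunklLaplacian_apply, hlap,
    zero_mul, map_zero, add_zero, ← Finset.mul_sum, ← map_sum, ← Finset.sum_mul,
    D.sum_X_mul_dunklOp hf] at hsum
  rw [hsum]
  simp only [add_mul, Finset.sum_mul, smul_mul_assoc, sub_mul, map_add, map_sum, map_smul, map_sub,
    smul_eq_mul, Nat.cast_succ]

/-- Integrating `∑ᵢ Tᵢf Tᵢg` by parts in two ways gives `n ⟨f, g⟩ = m ⟨f, g⟩`. -/
theorem sphereMean_mul_eq_zero (hf : f.IsHomogeneous n) (hg : g.IsHomogeneous m)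
    (hflap : D.dunklLaplacian f = 0) (hglap : D.dunklLaplacian g = 0) (hnm : n ≠ m) :
    D.sphereMean (f * g) = 0 := by
  have hconst {k : ℕ} {p q : MvPolynomial ι ℝ} (hp : p.IsHomogeneous 0) (hq : q.IsHomogeneous k)
      (hqlap : D.dunklLaplacian q = 0) (hk : k ≠ 0) : D.sphereMean (p * q) = 0 := by
    rw [totalDegree_eq_zero_iff_eq_C.1 ((totalDegree_zero_iff_isHomogeneous _).2 hp),
      ← smul_eq_C_mul, map_smul, D.sphereMean_eq_zero_of_harmonic hq hk hqlap, smul_zero]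
  match n, m with
  | 0, m => exact hconst hf hg hglap hnm.symm
  | n, 0 => exact mul_comm g f ▸ hconst hg hf hflap hnm
  | n + 1, m + 1 =>
    have hfg := D.sphereMean_sum_dunklOp_mul_dunklOp hf hg hflap
    have hgf := D.sphereMean_sum_dunklOp_mul_dunklOp hg hf hglap
    simp only [mul_comm (D.dunklOp _ g), mul_comm g f, D.sphereMean_reflHom_mul _ g f,
      mul_comm g (D.reflHom _ f)] at hgf
    rw [hfg] at hgf
    have hpos : (0 : ℝ) < n + m + D.homDim := by have := D.one_le_homDim; positivity
    have hdeg : ((n : ℝ) - m) ≠ 0 := sub_ne_zero.2 fun h => hnm (by simpa using h)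
    refine (mul_eq_zero.1 ((mul_eq_zero.1 ?_).resolve_left hpos.ne')).resolve_left hdeg
    push_cast at hgf
    linear_combination hgf

theorem sphereMean_homogeneousComponent_sq_le {H : MvPolynomial ι ℝ} (hH : D.dunklLaplacian H = 0)
    (n : ℕ) : D.sphereMean (homogeneousComponent n H ^ 2) ≤ D.sphereMean (H ^ 2) := by
  have hnonneg (f : MvPolynomial ι ℝ) : 0 ≤ D.sphereMean (f ^ 2) :=
    D.sphereMean_nonneg fun x _ => (map_pow (eval x) f 2).symm ▸ sq_nonneg _
  obtain hn | hn := lt_or_ge H.totalDegree n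
  · rw [homogeneousComponent_eq_zero _ _ hn, zero_pow two_ne_zero, map_zero]
    exact hnonneg H
  have hsum : D.sphereMean (H ^ 2) = ∑ i ∈ Finset.range (H.totalDegree + 1),
      D.sphereMean (homogeneousComponent i H ^ 2) := by
    conv_lhs => rw [← sum_homogeneousComponent H, sq, Finset.sum_mul_sum, map_sum]
    refine Finset.sum_congr rfl fun i hi => ?_
    rw [map_sum, Finset.sum_eq_single_of_mem i hi, sq]
    exact fun j _ hj => D.sphereMean_mul_eq_zero (homogeneousComponent_isHomogeneous i H)
      (homogeneousComponent_isHomogeneous j H) (D.dunklLaplacian_homogeneousComponent_eq_zero hH i)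
      (D.dunklLaplacian_homogeneousComponent_eq_zero hH j) hj.symm
  rw [hsum]
  exact Finset.single_le_sum (f := fun i => D.sphereMean (homogeneousComponent i H ^ 2))
    (fun i _ => hnonneg _) (Finset.mem_range_succ_iff.2 hn)

end DunklSystem

/-! ### Markov's inequality on the unit ball -/

section Markov

lemma abs_eval_one_derivative_le {n : ℕ} {P : Polynomial ℝ} (hdeg : P.degree ≤ n) {M : ℝ}
    (hM : ∀ t ∈ Set.Icc (-1 : ℝ) 1, |P.eval t| ≤ M) :
    |P.derivative.eval 1| ≤ n ^ 2 * M := by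
  have hle : ∀ K > M, ∀ Q : Polynomial ℝ, Q.degree ≤ n →
      (∀ t ∈ Set.Icc (-1 : ℝ) 1, |Q.eval t| ≤ K) → Q.derivative.eval 1 ≤ n ^ 2 * K := by
    intro K hMK Q hQ hb
    have hK : 0 < K := ((abs_nonneg _).trans (hM 1 (by simp))).trans_lt hMK
    have h := Polynomial.Chebyshev.eval_iterate_derivative_le_of_forall_abs_le_one (n := n)
      (P := Polynomial.C K⁻¹ * Q) (k := 1) le_rfl
      ((Polynomial.degree_C_mul (inv_ne_zero hK.ne')).trans_le hQ) fun t ht => by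
        rw [Polynomial.eval_C_mul, abs_mul, abs_of_pos (inv_pos.2 hK), inv_mul_le_one₀ hK]
        exact hb t ht
    rwa [Function.iterate_one, Polynomial.derivative_C_mul,
      Polynomial.eval_C_mul, Polynomial.Chebyshev.derivative_T_eval_one, inv_mul_le_iff₀ hK,
      mul_comm, Int.cast_natCast] at h
  have hlim : Tendsto (fun K : ℝ => n ^ 2 * K) (𝓝[>] M) (𝓝 (n ^ 2 * M)) :=
    ((continuous_const.mul continuous_id).tendsto M).mono_left nhdsWithin_le_nhds
  refine ge_of_tendsto hlim (eventually_mem_nhdsWithin.mono fun K hK => abs_le'.2 ⟨?_, ?_⟩)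
  · exact hle K hK P hdeg fun t ht => (hM t ht).trans (le_of_lt hK)
  · simpa using hle K hK (-P) (by rwa [Polynomial.degree_neg]) fun t ht => by
      rw [Polynomial.eval_neg, abs_neg]; exact (hM t ht).trans (le_of_lt hK)

variable {ι : Type*}

lemma eval_smul_of_isHomogeneous {f : MvPolynomial ι ℝ} {n : ℕ} (hf : f.IsHomogeneous n) (c : ℝ)
    (x : ι → ℝ) : eval (c • x) f = c ^ n * eval x f := by
  simp only [eval_eq, Finset.mul_sum]
  refine Finset.sum_congr rfl fun m hm => ?_
  rw [mul_left_comm, hf.degree_eq_sum_deg_support hm, ← Finset.prod_pow_eq_pow_sum,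
    ← Finset.prod_mul_distrib]
  simp only [Pi.smul_apply, smul_eq_mul, mul_pow]

variable [Fintype ι]

lemma add_dotProduct_self_le {x y : ι → ℝ} {a b : ℝ} (ha : 0 ≤ a) (hb : 0 ≤ b)
    (hx : x ⬝ᵥ x ≤ a ^ 2) (hy : y ⬝ᵥ y ≤ b ^ 2) : (x + y) ⬝ᵥ (x + y) ≤ (a + b) ^ 2 := by
  have hnorm (z : ι → ℝ) : z ⬝ᵥ z = ‖WithLp.toLp 2 z‖ ^ 2 := by
    rw [EuclideanSpace.real_norm_sq_eq]
    simp only [dotProduct, sq]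
  rw [hnorm] at *
  rw [sq_le_sq₀ (norm_nonneg _) (by positivity)] at *
  exact (norm_add_le _ _).trans (add_le_add hx hy)

lemma convex_setOf_dotProduct_self_le_one : Convex ℝ {x : ι → ℝ | x ⬝ᵥ x ≤ 1} := by
  intro x hx y hy a b ha hb hab
  have hsmul {z : ι → ℝ} (hz : z ⬝ᵥ z ≤ 1) (c : ℝ) : (c • z) ⬝ᵥ (c • z) ≤ c ^ 2 := by
    rw [smul_dotProduct, dotProduct_smul, smul_smul, smul_eq_mul, ← sq]
    exact mul_le_of_le_one_right (sq_nonneg c) hz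
  simpa [hab] using add_dotProduct_self_le ha hb (hsmul hx a) (hsmul hy b)

lemma exists_dotProduct_self_eq_one_sqrt_smul_eq [Nonempty ι] (x : ι → ℝ) :
    ∃ u : ι → ℝ, u ⬝ᵥ u = 1 ∧ √(x ⬝ᵥ x) • u = x := by
  classical
  obtain rfl | hx := eq_or_ne x 0
  · exact ⟨Pi.single (Classical.arbitrary ι) 1, by simp, by simp⟩
  have hpos : 0 < x ⬝ᵥ x :=
    (dotProduct_self_star_nonneg x).lt_of_ne' (dotProduct_self_eq_zero.not.2 hx)
  refine ⟨(√(x ⬝ᵥ x))⁻¹ • x, ?_, smul_inv_smul₀ (Real.sqrt_pos.2 hpos).ne' x⟩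
  rw [smul_dotProduct, dotProduct_smul, smul_smul, smul_eq_mul, ← mul_inv,
    Real.mul_self_sqrt hpos.le, inv_mul_cancel₀ hpos.ne']

lemma abs_eval_le_pow_mul [Nonempty ι] {f : MvPolynomial ι ℝ} {n : ℕ} (hf : f.IsHomogeneous n)
    {M : ℝ} (hM : ∀ x : ι → ℝ, x ⬝ᵥ x = 1 → |eval x f| ≤ M) {ρ : ℝ} (hρ : 0 ≤ ρ) {x : ι → ℝ}
    (hx : x ⬝ᵥ x ≤ ρ ^ 2) : |eval x f| ≤ ρ ^ n * M := by
  obtain ⟨u, hu, hux⟩ := exists_dotProduct_self_eq_one_sqrt_smul_eq x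
  rw [← hux, eval_smul_of_isHomogeneous hf, abs_mul, abs_of_nonneg (by positivity)]
  exact mul_le_mul (pow_le_pow_left₀ (Real.sqrt_nonneg _) (Real.sqrt_le_iff.2 ⟨hρ, hx⟩) n)
    (hM u hu) (abs_nonneg _) (by positivity)

lemma abs_eval_dirDeriv_le_of_segment {f : MvPolynomial ι ℝ} {n : ℕ} (hf : f.totalDegree ≤ n)
    {z w : ι → ℝ} {h K : ℝ} (hh : 0 < h)
    (hK : ∀ s ∈ Set.Icc 0 h, |eval (z + s • w) f| ≤ K) :
    |eval z (dirDeriv w f)| ≤ 2 * n ^ 2 * K / h := by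
  let g (i : ι) : Polynomial ℝ :=
    Polynomial.C (z i) + Polynomial.C (h / 2 * w i) * (1 - Polynomial.X)
  have heval (t : ℝ) : (aeval g f).eval t = eval (z + (h / 2 * (1 - t)) • w) f := by
    rw [← Polynomial.coe_evalRingHom, map_aeval]
    change eval₂Hom _ _ f = eval₂Hom (RingHom.id ℝ) _ f
    congr 2
    · ext; simp
    · ext i; simp [g]; ring
  have hderiv : (aeval g f).derivative.eval 1 = -(h / 2) * eval z (dirDeriv w f) := by
    have hinner : HasDerivAt (fun t : ℝ => h / 2 * (1 - t)) (-(h / 2)) 1 := by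
      simpa using ((hasDerivAt_id (1 : ℝ)).const_sub 1).const_mul (h / 2)
    have houter : HasDerivAt (fun s : ℝ => eval (z + s • w) f) (eval z (dirDeriv w f)) 0 := by
      simpa [fderiv_eval] using hasDerivAt_comp_add_smul (x := z) (v := w) (t := 0)
        ((contDiff_eval f).differentiable one_ne_zero _)
    have hleft := (aeval g f).hasDerivAt 1
    rw [funext heval] at hleft
    rw [mul_comm]
    exact hleft.unique (houter.comp_of_eq 1 hinner (by simp))
  have hmarkov := abs_eval_one_derivative_le (P := aeval g f) (n := n) (M := K)
    (Polynomial.natDegree_le_iff_degree_le.1 (by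
      simpa using aeval_natDegree_le (n := 1) f hf g fun i => by unfold g; compute_degree))
    fun t ht => by
      rw [heval]
      exact hK _ ⟨by nlinarith [ht.2], by nlinarith [ht.1]⟩
  rw [hderiv, abs_mul, abs_neg, abs_of_pos (half_pos hh)] at hmarkov
  rw [le_div_iff₀ hh]
  linarith

lemma one_add_inv_pow_le_three (n : ℕ) : (1 + ((n : ℝ) + 1)⁻¹) ^ n ≤ 3 := by
  calc (1 + ((n : ℝ) + 1)⁻¹) ^ n ≤ (1 + ((n : ℝ) + 1)⁻¹) ^ (n + 1) :=
        pow_le_pow_right₀ (le_add_of_nonneg_right (by positivity)) n.le_succ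
    _ ≤ Real.exp 1 := by exact_mod_cast Real.one_add_inv_pow_le_exp (n := n + 1)
    _ ≤ 3 := Real.exp_one_lt_three.le

variable [Nonempty ι] {f : MvPolynomial ι ℝ} {n : ℕ} {M : ℝ} {x y z w : ι → ℝ}

/-- The exponent is not sharp: on a segment of length `1 / (n + 1)` leaving the unit ball, a
homogeneous polynomial of degree `n` exceeds its maximum on the ball at most threefold. -/
lemma abs_eval_dirDeriv_le (hf : f.IsHomogeneous n)
    (hM : ∀ x : ι → ℝ, x ⬝ᵥ x = 1 → |eval x f| ≤ M) (hz : z ⬝ᵥ z ≤ 1) (hw : w ⬝ᵥ w ≤ 1) :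
    |eval z (dirDeriv w f)| ≤ 6 * (n + 1) ^ 3 * M := by
  classical
  have hM0 : 0 ≤ M := (abs_nonneg _).trans (hM (Pi.single (Classical.arbitrary ι) 1) (by simp))
  have hsegment : ∀ s ∈ Set.Icc 0 ((n : ℝ) + 1)⁻¹, |eval (z + s • w) f| ≤ 3 * M := by
    intro s hs
    have hsw : (s • w) ⬝ᵥ (s • w) ≤ s ^ 2 := by
      rw [smul_dotProduct, dotProduct_smul, smul_smul, smul_eq_mul, ← sq]
      exact mul_le_of_le_one_right (sq_nonneg s) hw
    calc |eval (z + s • w) f| ≤ (1 + s) ^ n * M :=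
          abs_eval_le_pow_mul hf hM (add_nonneg zero_le_one hs.1)
            (add_dotProduct_self_le zero_le_one hs.1 (by rwa [one_pow]) hsw)
      _ ≤ (1 + ((n : ℝ) + 1)⁻¹) ^ n * M := by have := hs.1; gcongr; exact hs.2
      _ ≤ 3 * M := mul_le_mul_of_nonneg_right (one_add_inv_pow_le_three n) hM0
  calc |eval z (dirDeriv w f)| ≤ 2 * n ^ 2 * (3 * M) / ((n : ℝ) + 1)⁻¹ :=
        abs_eval_dirDeriv_le_of_segment hf.totalDegree_le (by positivity) hsegment
    _ = 6 * (n ^ 2 * (n + 1)) * M := by rw [div_inv_eq_mul]; ring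
    _ ≤ 6 * ((n + 1) ^ 2 * (n + 1)) * M := by gcongr; linarith
    _ = 6 * (n + 1) ^ 3 * M := by ring

lemma abs_eval_sub_le_mul_sqrt (hf : f.IsHomogeneous n)
    (hM : ∀ x : ι → ℝ, x ⬝ᵥ x = 1 → |eval x f| ≤ M) (hx : x ⬝ᵥ x ≤ 1) (hy : y ⬝ᵥ y ≤ 1) :
    |eval y f - eval x f| ≤ 6 * (n + 1) ^ 3 * M * √((y - x) ⬝ᵥ (y - x)) := by
  obtain ⟨u, hu, hux⟩ := exists_dotProduct_self_eq_one_sqrt_smul_eq (y - x)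
  obtain ⟨t, -, ht, heq⟩ := exists_sub_eq_fderiv convex_setOf_dotProduct_self_le_one
    (F := fun x => eval x f) (v := y - x)
    (fun z _ => (contDiff_eval f).differentiable one_ne_zero z) hx (by rwa [add_sub_cancel])
  have hdir : dirDeriv (y - x) f = √((y - x) ⬝ᵥ (y - x)) • dirDeriv u f := by
    rw [← Derivation.smul_apply, ← map_smul, hux]
  rw [add_sub_cancel, fderiv_eval] at heq
  rw [heq, hdir, smul_eval, abs_mul, abs_of_nonneg (Real.sqrt_nonneg _), mul_comm]
  exact mul_le_mul_of_nonneg_right (abs_eval_dirDeriv_le hf hM ht hu.le) (Real.sqrt_nonneg _)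

end Markov

/-! ### Moments of linear forms and Nikolskii's inequality -/

lemma geom_sum₂_nonneg_of_odd (a b : ℝ) {n : ℕ} (hn : Odd n) :
    0 ≤ ∑ i ∈ Finset.range n, a ^ i * b ^ (n - 1 - i) := by
  have h := (Commute.all a b).geom_sum₂_mul n
  obtain hab | rfl | hab := lt_trichotomy a b
  · exact nonneg_of_mul_nonpos_left (h.trans_le (sub_nonpos.2 (hn.pow_le_pow.2 hab.le)))
      (sub_neg.2 hab)
  · rw [geom_sum₂_self]
    exact mul_nonneg n.cast_nonneg ((hn.tsub_odd odd_one).pow_nonneg a)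
  · exact nonneg_of_mul_nonneg_left (h.symm ▸ sub_nonneg.2 (hn.pow_le_pow.2 hab.le))
      (sub_pos.2 hab)

lemma pow_mul_add_two_mul_le (m K : ℕ) :
    (2 * m + 1 : ℝ) ^ K * (2 * m + 1 + 2 * K) ≤ (2 * (m + 1) + 1) ^ K * (2 * m + 1) := by
  have hbernoulli := one_add_mul_le_pow (a := 2 / (2 * m + 1 : ℝ))
    (le_trans (by norm_num) (by positivity : (0 : ℝ) ≤ 2 / (2 * m + 1))) K
  calc (2 * m + 1 : ℝ) ^ K * (2 * m + 1 + 2 * K)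
      = (2 * m + 1) ^ K * (1 + K * (2 / (2 * m + 1))) * (2 * m + 1) := by field_simp
    _ ≤ (2 * m + 1) ^ K * (1 + 2 / (2 * m + 1)) ^ K * (2 * m + 1) := by gcongr
    _ = (2 * (m + 1) + 1) ^ K * (2 * m + 1) := by rw [← mul_pow]; field_simp; ring

section Sphere

variable {ι : Type*} [Fintype ι] {f : MvPolynomial ι ℝ} {n : ℕ} {v x : ι → ℝ}

lemma abs_dotProduct_le_one (hv : v ⬝ᵥ v = 1) (hx : x ⬝ᵥ x = 1) : |v ⬝ᵥ x| ≤ 1 := by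
  have hadd : 0 ≤ (v + x) ⬝ᵥ (v + x) := dotProduct_self_star_nonneg _
  have hsub : 0 ≤ (v - x) ⬝ᵥ (v - x) := dotProduct_self_star_nonneg _
  simp only [add_dotProduct, dotProduct_add, sub_dotProduct, dotProduct_sub, hv, hx,
    dotProduct_comm x v] at hadd hsub
  exact abs_le.2 ⟨by linarith, by linarith⟩

lemma exists_forall_abs_eval_le [Nonempty ι] (f : MvPolynomial ι ℝ) :
    ∃ v : ι → ℝ, v ⬝ᵥ v = 1 ∧ ∀ x : ι → ℝ, x ⬝ᵥ x = 1 → |eval x f| ≤ |eval v f| := by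
  classical
  have hcompact : IsCompact {x : ι → ℝ | x ⬝ᵥ x = 1} :=
    isCompact_setOf_dotProduct_self_le_one.of_isClosed_subset
      (isClosed_eq continuous_dotProduct_self continuous_const) fun x hx => le_of_eq hx
  obtain ⟨v, hv, hmax⟩ := hcompact.exists_isMaxOn
    ⟨Pi.single (Classical.arbitrary ι) 1, by simp⟩ (continuous_eval f).abs.continuousOn
  exact ⟨v, hv, fun x hx => hmax hx⟩

lemma sq_eval_le_add_dotProduct_sub [Nonempty ι] (hf : f.IsHomogeneous n) (hv : v ⬝ᵥ v = 1)
    (hmax : ∀ x : ι → ℝ, x ⬝ᵥ x = 1 → |eval x f| ≤ |eval v f|) (hx : x ⬝ᵥ x = 1) :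
    eval v f ^ 2 ≤
      2 * eval x f ^ 2 + 2 * (6 * (n + 1) ^ 3) ^ 2 * eval v f ^ 2 * ((x - v) ⬝ᵥ (x - v)) := by
  set L : ℝ := 6 * (n + 1) ^ 3 * |eval v f|
  set δ := (x - v) ⬝ᵥ (x - v)
  have hδ : 0 ≤ δ := dotProduct_self_star_nonneg _
  have hle : |eval v f| ≤ |eval x f| + L * √δ := by
    have hlip := abs_eval_sub_le_mul_sqrt hf hmax hv.le hx.le
    have htri := abs_sub_abs_le_abs_sub (eval v f) (eval x f)
    rw [abs_sub_comm] at htri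
    linarith
  calc eval v f ^ 2 = |eval v f| ^ 2 := (sq_abs _).symm
    _ ≤ (|eval x f| + L * √δ) ^ 2 := by gcongr
    _ ≤ 2 * (|eval x f| ^ 2 + (L * √δ) ^ 2) := add_sq_le
    _ = 2 * eval x f ^ 2 + 2 * (6 * (n + 1) ^ 3) ^ 2 * eval v f ^ 2 * δ := by
      rw [mul_pow, mul_pow, Real.sq_sqrt hδ, sq_abs, sq_abs]; ring

lemma sq_eval_le_add_one_sub_sq [Nonempty ι] (hf : f.IsHomogeneous n) (hv : v ⬝ᵥ v = 1)
    (hmax : ∀ x : ι → ℝ, x ⬝ᵥ x = 1 → |eval x f| ≤ |eval v f|) (hx : x ⬝ᵥ x = 1) :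
    eval v f ^ 2 ≤
      2 * eval x f ^ 2 + (12 * (n + 1) ^ 3) ^ 2 * eval v f ^ 2 * (1 - (v ⬝ᵥ x) ^ 2) := by
  obtain ⟨s, hs, hsx⟩ : ∃ s : ℝ, |s| = 1 ∧ s * (v ⬝ᵥ x) = |v ⬝ᵥ x| := by
    obtain h | h := le_total 0 (v ⬝ᵥ x)
    · exact ⟨1, by simp, by simp [abs_of_nonneg h]⟩
    · exact ⟨-1, by simp, by simp [abs_of_nonpos h]⟩
  have hsv : (s • v) ⬝ᵥ (s • v) = 1 := by
    rw [smul_dotProduct, dotProduct_smul, smul_smul, hv, ← abs_mul_abs_self, hs, one_mul, one_smul]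
  have hpole : |eval (s • v) f| = |eval v f| := by
    rw [eval_smul_of_isHomogeneous hf, abs_mul, abs_pow, hs, one_pow, one_mul]
  have hdist : (x - s • v) ⬝ᵥ (x - s • v) ≤ 2 * (1 - (v ⬝ᵥ x) ^ 2) := by
    have hsq : (v ⬝ᵥ x) ^ 2 ≤ |v ⬝ᵥ x| := by
      rw [← sq_abs, sq]
      exact mul_le_of_le_one_left (abs_nonneg _) (abs_dotProduct_le_one hv hx)
    simp only [sub_dotProduct, dotProduct_sub, hx, hsv]
    simp only [smul_dotProduct, dotProduct_smul, smul_eq_mul, dotProduct_comm x v, hsx]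
    linarith
  have h := sq_eval_le_add_dotProduct_sub hf hsv (hpole ▸ hmax) hx
  rw [← sq_abs (eval (s • v) f), hpole, sq_abs] at h
  calc eval v f ^ 2
      ≤ 2 * eval x f ^ 2 +
        2 * (6 * (n + 1) ^ 3) ^ 2 * eval v f ^ 2 * ((x - s • v) ⬝ᵥ (x - s • v)) := h
    _ ≤ 2 * eval x f ^ 2 +
        2 * (6 * (n + 1) ^ 3) ^ 2 * eval v f ^ 2 * (2 * (1 - (v ⬝ᵥ x) ^ 2)) := by gcongr
    _ = _ := by ring

end Sphere

namespace DunklSystem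

variable {ι J : Type*} [Fintype ι] (D : DunklSystem ι J) {v : ι → ℝ}

lemma divDiff_linForm_pow (j : J) (v : ι → ℝ) (n : ℕ) : D.divDiff j (linForm v ^ n) =
    (D.root j ⬝ᵥ v) • ∑ i ∈ Finset.range n,
      linForm v ^ i * D.reflHom j (linForm v) ^ (n - 1 - i) :=
  divDiff_eq <| by
    rw [map_pow, ← (Commute.all _ _).geom_sum₂_mul, ← D.linForm_root_mul_divDiff j (linForm v),
      divDiff_linForm, smul_eq_C_mul]
    ring

variable [Fintype J]

lemma mul_eval_linForm_pow_le_eval_dunklOp (hv : v ⬝ᵥ v = 1) (m : ℕ) (x : ι → ℝ) :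
    (2 * m + 1) * eval x (linForm v ^ (2 * m)) ≤
      eval x (D.dunklOp v (linForm v ^ (2 * m + 1))) := by
  have hderiv : dirDeriv v (linForm v ^ (2 * m + 1)) = (2 * m + 1 : ℝ) • linForm v ^ (2 * m) := by
    rw [Derivation.leibniz_pow, dirDeriv_linForm, hv, add_tsub_cancel_right, smul_eq_mul, map_one,
      mul_one, ← Nat.cast_smul_eq_nsmul ℝ]
    push_cast
    rfl
  rw [dunklOp_apply, hderiv, map_add, smul_eval, map_sum]
  refine le_add_of_nonneg_right (Finset.sum_nonneg fun j _ => ?_)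
  rw [divDiff_linForm_pow, smul_smul, smul_eval, mul_assoc (D.mult j), ← sq, map_sum]
  simp only [map_mul, map_pow]
  exact mul_nonneg (mul_nonneg (D.mult_nonneg j) (sq_nonneg _))
    (geom_sum₂_nonneg_of_odd _ _ (odd_two_mul_add_one m))

variable [DecidableEq ι] [Nonempty ι]

lemma mul_sphereMean_linForm_pow_le (hv : v ⬝ᵥ v = 1) (m : ℕ) :
    (2 * m + 1) * D.sphereMean (linForm v ^ (2 * m)) ≤
      (2 * m + D.homDim) * D.sphereMean (linForm v ^ (2 * (m + 1))) := by
  calc (2 * m + 1) * D.sphereMean (linForm v ^ (2 * m))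
      = D.sphereMean ((2 * m + 1 : ℝ) • linForm v ^ (2 * m)) := by rw [map_smul, smul_eq_mul]
    _ ≤ D.sphereMean (D.dunklOp v (linForm v ^ (2 * m + 1))) := D.sphereMean_mono fun x _ => by
      rw [smul_eval]; exact D.mul_eval_linForm_pow_le_eval_dunklOp hv m x
    _ = (2 * m + D.homDim) * D.sphereMean (linForm v ^ (2 * (m + 1))) := by
      rw [D.sphereMean_dunklOp ((linForm_isHomogeneous v).pow _), ← pow_succ']
      push_cast
      ring_nf

lemma mul_sphereMean_linForm_pow_sub_le (hv : v ⬝ᵥ v = 1) (m : ℕ) :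
    2 * m * (D.sphereMean (linForm v ^ (2 * m)) - D.sphereMean (linForm v ^ (2 * (m + 1)))) ≤
      D.homDim * D.sphereMean (linForm v ^ (2 * m)) := by
  have hle := D.mul_sphereMean_linForm_pow_le hv m
  have hnonneg : 0 ≤ D.sphereMean (linForm v ^ (2 * m)) :=
    D.sphereMean_nonneg fun x _ => by rw [map_pow, pow_mul]; positivity
  have hanti : D.sphereMean (linForm v ^ (2 * (m + 1))) ≤ D.sphereMean (linForm v ^ (2 * m)) :=
    D.sphereMean_mono fun x hx => by
      rw [map_pow, map_pow, pow_mul, pow_mul, eval_linForm]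
      exact pow_le_pow_of_le_one (sq_nonneg _)
        ((sq_le_one_iff_abs_le_one _).2 (abs_dotProduct_le_one hv hx)) m.le_succ
  have hdim := mul_le_mul_of_nonneg_left hanti (zero_le_one.trans D.one_le_homDim)
  linarith

lemma one_le_mul_sphereMean_linForm_pow {K : ℕ} (hK : D.homDim ≤ 2 * K + 1) (hv : v ⬝ᵥ v = 1)
    (m : ℕ) : 1 ≤ (2 * m + 1) ^ K * D.sphereMean (linForm v ^ (2 * m)) := by
  induction m with
  | zero => simp [sphereMean_one]
  | succ m ih =>
    set μ := D.sphereMean (linForm v ^ (2 * (m + 1)))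
    have hμ : 0 ≤ μ := D.sphereMean_nonneg fun x _ => by
      rw [map_pow, pow_mul]; positivity
    have hmain : (2 * m + 1 : ℝ) * 1 ≤ (2 * m + 1) * ((2 * (m + 1) + 1) ^ K * μ) :=
      calc (2 * m + 1 : ℝ) * 1
          ≤ (2 * m + 1) * ((2 * m + 1) ^ K * D.sphereMean (linForm v ^ (2 * m))) := by gcongr
        _ = (2 * m + 1) ^ K * ((2 * m + 1) * D.sphereMean (linForm v ^ (2 * m))) := by ring
        _ ≤ (2 * m + 1) ^ K * ((2 * m + D.homDim) * μ) := by
          gcongr (2 * m + 1) ^ K * ?_; exact D.mul_sphereMean_linForm_pow_le hv m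
        _ ≤ (2 * m + 1) ^ K * ((2 * m + 1 + 2 * K) * μ) := by
          gcongr (2 * m + 1) ^ K * (?_ * μ); linarith
        _ ≤ (2 * m + 1) * ((2 * (m + 1) + 1) ^ K * μ) := by
          linarith [mul_le_mul_of_nonneg_right (pow_mul_add_two_mul_le m K) hμ]
    push_cast
    exact le_of_mul_le_mul_left hmain (by positivity)

lemma sq_eval_mul_sphereMean_linForm_pow_le {f : MvPolynomial ι ℝ} {n : ℕ}
    (hf : f.IsHomogeneous n) (hv : v ⬝ᵥ v = 1)
    (hmax : ∀ x : ι → ℝ, x ⬝ᵥ x = 1 → |eval x f| ≤ |eval v f|) (m : ℕ) :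
    eval v f ^ 2 * D.sphereMean (linForm v ^ (2 * m)) ≤ 2 * D.sphereMean (f ^ 2) +
      (12 * (n + 1) ^ 3) ^ 2 * eval v f ^ 2 *
        (D.sphereMean (linForm v ^ (2 * m)) - D.sphereMean (linForm v ^ (2 * (m + 1)))) := by
  have hmono (p q r : MvPolynomial ι ℝ) (a b c : ℝ)
      (h : ∀ x : ι → ℝ, x ⬝ᵥ x = 1 → a * eval x p ≤ b * eval x q + c * eval x r) :
      a * D.sphereMean p ≤ b * D.sphereMean q + c * D.sphereMean r := by
    simpa using D.sphereMean_mono (f := a • p) (g := b • q + c • r) (by simpa using h)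
  rw [← map_sub]
  refine hmono _ _ _ _ _ _ fun x hx => ?_
  simp only [map_sub, map_pow, eval_linForm]
  set l := v ⬝ᵥ x
  have hl : (l ^ 2) ^ m ≤ 1 :=
    pow_le_one₀ (sq_nonneg l) ((sq_le_one_iff_abs_le_one l).2 (abs_dotProduct_le_one hv hx))
  calc eval v f ^ 2 * l ^ (2 * m) = eval v f ^ 2 * (l ^ 2) ^ m := by rw [pow_mul]
    _ ≤ (2 * eval x f ^ 2 + (12 * (n + 1) ^ 3) ^ 2 * eval v f ^ 2 * (1 - l ^ 2)) * (l ^ 2) ^ m := by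
      gcongr; exact sq_eval_le_add_one_sub_sq hf hv hmax hx
    _ = 2 * (eval x f ^ 2 * (l ^ 2) ^ m) +
        (12 * (n + 1) ^ 3) ^ 2 * eval v f ^ 2 * (l ^ (2 * m) - l ^ (2 * (m + 1))) := by
      rw [pow_mul, pow_mul, pow_succ]; ring
    _ ≤ 2 * eval x f ^ 2 +
        (12 * (n + 1) ^ 3) ^ 2 * eval v f ^ 2 * (l ^ (2 * m) - l ^ (2 * (m + 1))) := by
      gcongr; exact mul_le_of_le_one_right (sq_nonneg _) hl

/-- By Markov's inequality `|f|` stays large near a maximum point `v` on the sphere, and the high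
moments of `⟨v, x⟩` show that the mean charges that region. -/
theorem exists_sq_eval_le_sphereMean_sq : ∃ (c : ℝ) (k : ℕ), 0 ≤ c ∧
    ∀ (n : ℕ) (f : MvPolynomial ι ℝ), f.IsHomogeneous n → ∀ x : ι → ℝ, x ⬝ᵥ x = 1 →
      eval x f ^ 2 ≤ c * (n + 1) ^ k * D.sphereMean (f ^ 2) := by
  obtain ⟨K, hK⟩ := exists_nat_ge D.homDim
  have hK1 : (1 : ℝ) ≤ K := D.one_le_homDim.trans hK
  refine ⟨4 * (288 * K + 1) ^ K, 6 * K, by positivity, fun n f hf x hx => ?_⟩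
  obtain ⟨v, hv, hmax⟩ := exists_forall_abs_eval_le f
  -- This `m` makes the error term in `hpeak` at most half of its left-hand side.
  obtain ⟨m, hm⟩ : ∃ m : ℕ, m = 144 * K * (n + 1) ^ 6 := ⟨_, rfl⟩
  have hm' : (m : ℝ) = 144 * K * (n + 1) ^ 6 := by rw [hm]; push_cast; rfl
  have hmoment := D.one_le_mul_sphereMean_linForm_pow (by linarith : D.homDim ≤ 2 * K + 1) hv m
  have hdrop := D.mul_sphereMean_linForm_pow_sub_le hv m
  have hpeak := D.sq_eval_mul_sphereMean_linForm_pow_le hf hv hmax m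
  set μ := D.sphereMean (linForm v ^ (2 * m))
  set μ' := D.sphereMean (linForm v ^ (2 * (m + 1)))
  have hμ : 0 ≤ μ := D.sphereMean_nonneg fun x _ => by rw [map_pow, pow_mul]; positivity
  have hsmall : (12 * (n + 1) ^ 3) ^ 2 * (μ - μ') ≤ μ / 2 := by
    have hKμ : K * (288 * (n + 1) ^ 6 * (μ - μ')) ≤ K * μ := by
      rw [hm'] at hdrop
      linarith [mul_le_mul_of_nonneg_right hK hμ]
    linarith [le_of_mul_le_mul_left hKμ (by linarith)]
  have hhalf : eval v f ^ 2 * μ ≤ 4 * D.sphereMean (f ^ 2) := by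
    linarith [mul_le_mul_of_nonneg_left hsmall (sq_nonneg (eval v f))]
  have hbase : (2 * m + 1 : ℝ) ≤ (288 * K + 1) * (n + 1) ^ 6 := by
    have : (1 : ℝ) ≤ (n + 1) ^ 6 := one_le_pow₀ (by linarith [n.cast_nonneg (α := ℝ)])
    linarith
  calc eval x f ^ 2 ≤ eval v f ^ 2 := sq_le_sq.2 (hmax x hx)
    _ ≤ eval v f ^ 2 * ((2 * m + 1) ^ K * μ) := le_mul_of_one_le_right (sq_nonneg _) hmoment
    _ = (2 * m + 1) ^ K * (eval v f ^ 2 * μ) := by ring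
    _ ≤ ((288 * K + 1) * (n + 1) ^ 6) ^ K * (4 * D.sphereMean (f ^ 2)) := by gcongr
    _ = 4 * (288 * K + 1) ^ K * (n + 1) ^ (6 * K) * D.sphereMean (f ^ 2) := by
      rw [mul_pow, ← pow_mul]; ring

end DunklSystem

/-! ### Interior estimates and smoothness in the unit ball -/

lemma pow_tsub_le_inv_pow_mul_pow {r : ℝ} (h0 : 0 < r) (h1 : r ≤ 1) (n b : ℕ) :
    r ^ (n - b) ≤ r⁻¹ ^ b * r ^ n := by
  rw [inv_pow, inv_mul_eq_div, le_div_iff₀ (pow_pos h0 b), ← pow_add]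
  exact pow_le_pow_of_le_one h0.le h1 (by lia)

lemma summable_add_one_pow_mul_geometric (k : ℕ) {r : ℝ} (h0 : 0 < r) (h1 : r < 1) :
    Summable fun n : ℕ => ((n : ℝ) + 1) ^ k * r ^ n := by
  have h := (summable_nat_add_iff 1).2 (summable_pow_mul_geometric_of_norm_lt_one k
    (r := r) (by rwa [Real.norm_eq_abs, abs_of_pos h0]))
  refine (h.mul_left r⁻¹).congr fun n => ?_
  rw [Nat.cast_succ, pow_succ]
  field_simp

/-- Iterated partial derivatives of polynomials along a list of coordinate directions. -/
def iteratedPDeriv {ι : Type*} : List ι → MvPolynomial ι ℝ →ₗ[ℝ] MvPolynomial ι ℝ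
  | [] => LinearMap.id
  | i :: β => iteratedPDeriv β ∘ₗ (pderiv i).toLinearMap

lemma iteratedPDeriv_isHomogeneous {ι : Type*} {f : MvPolynomial ι ℝ} {n : ℕ}
    (hf : f.IsHomogeneous n) (β : List ι) :
    (iteratedPDeriv β f).IsHomogeneous (n - β.length) := by
  induction β generalizing f n with
  | nil => exact hf
  | cons i β ih =>
    rw [List.length_cons, add_comm, ← Nat.sub_sub]
    exact ih hf.pderiv

section PolynomialLimits

variable {ι : Type*} [Fintype ι]

lemma abs_eval_iteratedPDeriv_le [Nonempty ι] {f : MvPolynomial ι ℝ} {n : ℕ} {M : ℝ}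
    (hf : f.IsHomogeneous n) (hM : ∀ x : ι → ℝ, x ⬝ᵥ x = 1 → |eval x f| ≤ M) (β : List ι)
    {x : ι → ℝ} (hx : x ⬝ᵥ x = 1) :
    |eval x (iteratedPDeriv β f)| ≤ (6 * (n + 1) ^ 3) ^ β.length * M := by
  classical
  have hM0 : 0 ≤ M := (abs_nonneg _).trans (hM x hx)
  induction β generalizing f n M with
  | nil => simpa [iteratedPDeriv] using hM x hx
  | cons i β ih =>
    have hderiv (y : ι → ℝ) (hy : y ⬝ᵥ y = 1) :
        |eval y (pderiv i f)| ≤ 6 * (n + 1) ^ 3 * M := by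
      rw [← dirDeriv_single]
      exact abs_eval_dirDeriv_le hf hM hy.le (by simp)
    have hn : ((n - 1 : ℕ) : ℝ) ≤ n := Nat.cast_le.2 (Nat.sub_le n 1)
    calc |eval x (iteratedPDeriv β (pderiv i f))|
        ≤ (6 * ((n - 1 : ℕ) + 1) ^ 3) ^ β.length * (6 * (n + 1) ^ 3 * M) :=
          ih hf.pderiv hderiv (by positivity)
      _ ≤ (6 * (n + 1) ^ 3) ^ β.length * (6 * (n + 1) ^ 3 * M) := by gcongr
      _ = (6 * (n + 1) ^ 3) ^ (i :: β).length * M := by rw [List.length_cons, pow_succ]; ring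

lemma hasFDerivAt_eval (f : MvPolynomial ι ℝ) (x : ι → ℝ) :
    HasFDerivAt (fun y => eval y f)
      (∑ i, eval x (pderiv i f) • (ContinuousLinearMap.proj i : (ι → ℝ) →L[ℝ] ℝ)) x := by
  refine ((contDiff_eval f).differentiable one_ne_zero x).hasFDerivAt.congr_fderiv ?_
  ext1 v
  simp [fderiv_eval, dirDeriv_apply, smul_eval, mul_comm]

lemma hasFDerivAt_of_tendsto_eval {s : Set (ι → ℝ)} (hs : IsOpen s)
    {f : ℕ → MvPolynomial ι ℝ} {u : (ι → ℝ) → ℝ} {g : ι → (ι → ℝ) → ℝ}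
    (hg : ∀ i, TendstoUniformlyOn (fun k x => eval x (pderiv i (f k))) (g i) atTop s)
    (hu : ∀ x ∈ s, Tendsto (fun k => eval x (f k)) atTop (𝓝 (u x))) {x : ι → ℝ} (hx : x ∈ s) :
    HasFDerivAt u (∑ i, g i x • (ContinuousLinearMap.proj i : (ι → ℝ) →L[ℝ] ℝ)) x := by
  let L : (ι → ℝ) →L[ℝ] ((ι → ℝ) →L[ℝ] ℝ) :=
    ∑ i, (ContinuousLinearMap.proj i).smulRight (ContinuousLinearMap.proj i)
  have hL (c : ι → ℝ) : L c = ∑ i, c i • ContinuousLinearMap.proj i := by simp [L, sum_apply]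
  have hgrad : TendstoUniformlyOn (fun k x i => eval x (pderiv i (f k))) (fun x i => g i x)
      atTop s := by
    simp only [Metric.tendstoUniformlyOn_iff] at hg ⊢
    intro ε hε
    filter_upwards [eventually_all.2 fun i => hg i ε hε] with k hk x hx
    exact (dist_pi_lt_iff hε).2 fun i => hk i x hx
  have hlim := L.uniformContinuous.comp_tendstoUniformlyOn hgrad
  simp only [Function.comp_def, hL] at hlim
  exact hasFDerivAt_of_tendstoUniformlyOn hs hlim (fun k x _ => hasFDerivAt_eval (f k) x) hu hx

lemma contDiffOn_of_tendsto_eval {s : Set (ι → ℝ)} (hs : IsOpen s) {f : ℕ → MvPolynomial ι ℝ}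
    {u : (ι → ℝ) → ℝ}
    (hf : ∀ β, UniformCauchySeqOn (fun k x => eval x (iteratedPDeriv β (f k))) atTop s)
    (hu : ∀ x ∈ s, Tendsto (fun k => eval x (f k)) atTop (𝓝 (u x))) (m : ℕ) :
    ContDiffOn ℝ m u s := by
  induction m generalizing f u with
  | zero =>
    exact contDiffOn_zero.2 (((hf []).tendstoUniformlyOn_of_tendsto hu).continuousOn
      (Frequently.of_forall fun k => (contDiff_eval (n := 0) (f k)).continuous.continuousOn))
  | succ m ih =>
    have hlim (i : ι) (x : ι → ℝ) :
        ∃ y, x ∈ s → Tendsto (fun k => eval x (pderiv i (f k))) atTop (𝓝 y) := by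
      by_cases hx : x ∈ s
      · obtain ⟨y, hy⟩ := cauchySeq_tendsto_of_complete ((hf [i]).cauchySeq hx)
        exact ⟨y, fun _ => hy⟩
      · exact ⟨0, fun h => absurd h hx⟩
    choose g hg using hlim
    have hgC (i : ι) : ContDiffOn ℝ m (g i) s := ih (fun β => hf (i :: β)) (hg i)
    rw [Nat.cast_succ, contDiffOn_succ_iff_hasFDerivWithinAt_of_uniqueDiffOn hs.uniqueDiffOn]
    exact ⟨fun h => absurd h (by simp), _,
      ContDiffOn.sum fun i _ => (hgC i).smul contDiffOn_const,
      fun x hx => (hasFDerivAt_of_tendsto_eval hs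
        (fun i => (hf [i]).tendstoUniformlyOn_of_tendsto (hg i)) hu hx).hasFDerivWithinAt⟩

end PolynomialLimits

lemma exists_abs_sub_eval_le {ι : Type*} {S : Set (ι → ℝ)} (hS : IsCompact S) {v : (ι → ℝ) → ℝ}
    (hv : ContinuousOn v S) {ε : ℝ} (hε : 0 < ε) :
    ∃ f : MvPolynomial ι ℝ, ∀ x ∈ S, |v x - eval x f| ≤ ε := by
  have : CompactSpace S := isCompact_iff_compactSpace.1 hS
  let coord (i : ι) : C(S, ℝ) := ⟨fun x => x.1 i, (continuous_apply i).comp continuous_subtype_val⟩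
  have hcoord (f : MvPolynomial ι ℝ) (x : S) : aeval coord f x = eval x.1 f := by
    induction f using MvPolynomial.induction_on with
    | C a => simp
    | add p q hp hq => simp [hp, hq]
    | mul_X p i hp => simp [hp, coord]
  have hsep : (aeval coord : MvPolynomial ι ℝ →ₐ[ℝ] C(S, ℝ)).range.SeparatesPoints := by
    intro x y hxy
    obtain ⟨i, hi⟩ := Function.ne_iff.1 (Subtype.coe_ne_coe.2 hxy)
    exact ⟨_, ⟨coord i, ⟨X i, by simp⟩, rfl⟩, hi⟩
  obtain ⟨⟨_, f, rfl⟩, hf⟩ := ContinuousMap.exists_mem_subalgebra_near_continuous_of_separatesPoints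
    _ hsep (fun x : S => v x) (continuousOn_iff_continuous_domRestrict.1 hv) ε hε
  refine ⟨f, fun x hx => ?_⟩
  rw [abs_sub_comm, ← hcoord f ⟨x, hx⟩]
  exact (hf ⟨x, hx⟩).le

namespace DunklSystem

variable {ι J : Type*} [Fintype ι] [DecidableEq ι] [Fintype J] (D : DunklSystem ι J)

lemma dunklLaplacianFun_neg (F : (ι → ℝ) → ℝ) (x : ι → ℝ) :
    D.dunklLaplacianFun (-F) x = -D.dunklLaplacianFun F x := by
  have hsecond (v : ι → ℝ) : secondDirDeriv (-F) x v = -secondDirDeriv F x v := by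
    simp [secondDirDeriv, fderiv_neg]
  have hroot (j : J) : D.rootTerm j (-F) x = -D.rootTerm j F x := by
    simp only [rootTerm, fderiv_neg, neg_apply, Pi.neg_apply]
    ring
  simp only [dunklLaplacianFun, hsecond, hroot, mul_neg, Finset.sum_neg_distrib, neg_add]

variable [Nonempty ι]

lemma exists_abs_eval_homogeneousComponent_le :
    ∃ (c : ℝ) (k : ℕ), 0 ≤ c ∧ ∀ (H : MvPolynomial ι ℝ) (M : ℝ), D.dunklLaplacian H = 0 →
      (∀ x : ι → ℝ, x ⬝ᵥ x = 1 → |eval x H| ≤ M) → ∀ (n : ℕ) (x : ι → ℝ), x ⬝ᵥ x = 1 →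
        |eval x (homogeneousComponent n H)| ≤ c * (n + 1) ^ k * M := by
  obtain ⟨c, k, hc, hnik⟩ := D.exists_sq_eval_le_sphereMean_sq
  refine ⟨1 + c, k, by positivity, fun H M hH hM n x hx => ?_⟩
  have hM0 : 0 ≤ M := (abs_nonneg _).trans (hM x hx)
  have hmean : D.sphereMean (H ^ 2) ≤ M ^ 2 := by
    calc D.sphereMean (H ^ 2) ≤ D.sphereMean (M ^ 2 • 1) := D.sphereMean_mono fun y hy => by
          simpa [smul_eval] using sq_le_sq' (abs_le.1 (hM y hy)).1 (abs_le.1 (hM y hy)).2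
      _ = M ^ 2 := by rw [map_smul, sphereMean_one, smul_eq_mul, mul_one]
  have hN : (1 : ℝ) ≤ (n + 1) ^ k := one_le_pow₀ (by linarith [n.cast_nonneg (α := ℝ)])
  refine abs_le_of_sq_le_sq ?_ (by positivity)
  calc eval x (homogeneousComponent n H) ^ 2
      ≤ c * (n + 1) ^ k * D.sphereMean (homogeneousComponent n H ^ 2) :=
        hnik n _ (homogeneousComponent_isHomogeneous n H) x hx
    _ ≤ c * (n + 1) ^ k * M ^ 2 := by
        gcongr
        exact (D.sphereMean_homogeneousComponent_sq_le hH n).trans hmean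
    _ ≤ ((1 + c) * (n + 1) ^ k) ^ 2 * M ^ 2 := by
        gcongr
        nlinarith [mul_nonneg hc (zero_le_one.trans hN)]
    _ = ((1 + c) * (n + 1) ^ k * M) ^ 2 := by ring

/-- The geometric decay of the homogeneous components inside the ball beats the polynomial growth of
the bounds on the sphere. -/
theorem exists_abs_eval_iteratedPDeriv_le (β : List ι) {r : ℝ} (h0 : 0 < r) (h1 : r < 1) :
    ∃ B : ℝ, ∀ (H : MvPolynomial ι ℝ) (M : ℝ), D.dunklLaplacian H = 0 →
      (∀ x : ι → ℝ, x ⬝ᵥ x = 1 → |eval x H| ≤ M) →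
      ∀ x : ι → ℝ, x ⬝ᵥ x ≤ r ^ 2 → |eval x (iteratedPDeriv β H)| ≤ B * M := by
  obtain ⟨c, k, hc, hcomp⟩ := D.exists_abs_eval_homogeneousComponent_le
  set b := β.length
  let a (n : ℕ) : ℝ := r⁻¹ ^ b * 6 ^ b * c * ((n + 1) ^ (3 * b + k) * r ^ n)
  have ha : Summable a := (summable_add_one_pow_mul_geometric _ h0 h1).mul_left _
  refine ⟨∑' n, a n, fun H M hH hM x hx => ?_⟩
  have hM0 : 0 ≤ M :=
    (abs_nonneg _).trans (hM (Pi.single (Classical.arbitrary ι) 1) (by simp))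
  have hbound (n : ℕ) : |eval x (iteratedPDeriv β (homogeneousComponent n H))| ≤ a n * M := by
    have hhom := homogeneousComponent_isHomogeneous n H
    calc |eval x (iteratedPDeriv β (homogeneousComponent n H))|
        ≤ r ^ (n - b) * ((6 * (n + 1) ^ 3) ^ b * (c * (n + 1) ^ k * M)) :=
          abs_eval_le_pow_mul (iteratedPDeriv_isHomogeneous hhom β)
            (fun _ => abs_eval_iteratedPDeriv_le hhom (hcomp H M hH hM n) β) h0.le hx
      _ ≤ r⁻¹ ^ b * r ^ n * ((6 * (n + 1) ^ 3) ^ b * (c * (n + 1) ^ k * M)) := by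
          gcongr
          exact pow_tsub_le_inv_pow_mul_pow h0 h1.le n b
      _ = a n * M := by simp only [a, mul_pow, ← pow_mul, pow_add]; ring
  calc |eval x (iteratedPDeriv β H)|
      = |∑ n ∈ Finset.range (H.totalDegree + 1),
          eval x (iteratedPDeriv β (homogeneousComponent n H))| := by
        conv_lhs => rw [← sum_homogeneousComponent H, map_sum, map_sum]
    _ ≤ ∑ n ∈ Finset.range (H.totalDegree + 1), a n * M :=
        (Finset.abs_sum_le_sum_abs _ _).trans (Finset.sum_le_sum fun n _ => hbound n)
    _ ≤ (∑' n, a n) * M := by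
        rw [← Finset.sum_mul]
        gcongr
        exact ha.sum_le_tsum _ fun n _ => by positivity

lemma sub_eval_le_of_harmonic {v : (ι → ℝ) → ℝ} {ε : ℝ} (hc : ContinuousOn v {x | x ⬝ᵥ x ≤ 1})
    (h2 : ∀ x, x ⬝ᵥ x < 1 → ContDiffAt ℝ 2 v x)
    (hL : ∀ x, x ⬝ᵥ x < 1 → D.IsRegular x → D.dunklLaplacianFun v x = 0)
    {H : MvPolynomial ι ℝ} (hH : D.dunklLaplacian H = 0)
    (hε : ∀ x, x ⬝ᵥ x = 1 → v x - eval x H ≤ ε) {x : ι → ℝ} (hx : x ⬝ᵥ x ≤ 1) :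
    v x - eval x H ≤ ε := by
  have hneg (y : ι → ℝ) : v y - eval y H = (v + fun y => eval y (-H)) y := by
    rw [Pi.add_apply, map_neg, sub_eq_add_neg]
  simp only [hneg] at hε ⊢
  have hC2 (y : ι → ℝ) : ContDiffAt ℝ 2 (fun y => eval y (-H)) y := (contDiff_eval _).contDiffAt
  refine D.le_of_dunklLaplacianFun_nonneg
    (hc.add (contDiff_eval (n := 0) _).continuous.continuousOn)
    (fun y hy => (h2 y hy).add (hC2 y)) (fun y hy hreg => ?_) hε hx
  rw [D.dunklLaplacianFun_add (h2 y hy) (hC2 y), hL y hy hreg, D.dunklLaplacianFun_eval _ hreg,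
    map_neg, hH, neg_zero, map_zero, add_zero]

lemma exists_harmonic_abs_sub_eval_le {v : (ι → ℝ) → ℝ} (hc : ContinuousOn v {x | x ⬝ᵥ x ≤ 1})
    (h2 : ∀ x, x ⬝ᵥ x < 1 → ContDiffAt ℝ 2 v x)
    (hL : ∀ x, x ⬝ᵥ x < 1 → D.IsRegular x → D.dunklLaplacianFun v x = 0) {ε : ℝ} (hε : 0 < ε) :
    ∃ H : MvPolynomial ι ℝ, D.dunklLaplacian H = 0 ∧
      ∀ x : ι → ℝ, x ⬝ᵥ x ≤ 1 → |v x - eval x H| ≤ ε := by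
  have hS : {x : ι → ℝ | x ⬝ᵥ x = 1} ⊆ {x | x ⬝ᵥ x ≤ 1} := fun x hx => le_of_eq hx
  have hcompact : IsCompact {x : ι → ℝ | x ⬝ᵥ x = 1} :=
    isCompact_setOf_dotProduct_self_le_one.of_isClosed_subset
      (isClosed_eq continuous_dotProduct_self continuous_const) hS
  obtain ⟨f, hf⟩ := exists_abs_sub_eval_le hcompact (hc.mono hS) hε
  obtain ⟨H, hH, hHf⟩ := D.exists_harmonic_eval_eq f
  refine ⟨H, hH, fun x hx => abs_le'.2 ⟨?_, ?_⟩⟩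
  · exact D.sub_eval_le_of_harmonic hc h2 hL hH
      (fun y hy => hHf y hy ▸ (abs_le'.1 (hf y hy)).1) hx
  · have h := D.sub_eval_le_of_harmonic (H := -H) hc.neg (fun y hy => (h2 y hy).neg)
      (fun y hy hreg => by rw [dunklLaplacianFun_neg, hL y hy hreg, neg_zero])
      (by rw [map_neg, hH, neg_zero])
      (fun y hy => by
        rw [map_neg, hHf y hy, sub_neg_eq_add, Pi.neg_apply, neg_add_eq_sub, ← neg_sub]
        exact (abs_le'.1 (hf y hy)).2) hx
    rwa [map_neg, sub_neg_eq_add, Pi.neg_apply, neg_add_eq_sub, ← neg_sub] at h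

lemma uniformCauchySeqOn_eval_iteratedPDeriv {H : ℕ → MvPolynomial ι ℝ} {v : (ι → ℝ) → ℝ}
    (hH : ∀ k, D.dunklLaplacian (H k) = 0)
    (hHv : ∀ (k : ℕ) (x : ι → ℝ), x ⬝ᵥ x = 1 → |v x - eval x (H k)| ≤ 1 / ((k : ℝ) + 1))
    {r : ℝ} (h0 : 0 < r) (h1 : r < 1) (β : List ι) :
    UniformCauchySeqOn (fun k x => eval x (iteratedPDeriv β (H k))) atTop {x | x ⬝ᵥ x ≤ r ^ 2} := by
  obtain ⟨B, hB⟩ := D.exists_abs_eval_iteratedPDeriv_le β h0 h1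
  have hlim : Tendsto (fun k : ℕ => B * (2 * (1 / ((k : ℝ) + 1)))) atTop (𝓝 0) := by
    simpa using (tendsto_one_div_add_atTop_nhds_zero_nat.const_mul 2).const_mul B
  rw [Metric.uniformCauchySeqOn_iff]
  intro ε hε
  obtain ⟨N, hN⟩ := (hlim.eventually (gt_mem_nhds hε)).exists
  have hclose (k : ℕ) (hk : N ≤ k) (z : ι → ℝ) (hz : z ⬝ᵥ z = 1) :
      |v z - eval z (H k)| ≤ 1 / ((N : ℝ) + 1) := (hHv k z hz).trans (Nat.one_div_le_one_div hk)
  refine ⟨N, fun k hk l hl y hy => ?_⟩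
  rw [Real.dist_eq, ← map_sub, ← map_sub]
  refine (hB (H k - H l) _ (by rw [map_sub, hH, hH, sub_zero]) (fun z hz => ?_) y hy).trans_lt hN
  calc |eval z (H k - H l)| = |(v z - eval z (H l)) - (v z - eval z (H k))| := by
        rw [map_sub, sub_sub_sub_cancel_left]
    _ ≤ |v z - eval z (H l)| + |v z - eval z (H k)| := abs_sub _ _
    _ ≤ 2 * (1 / ((N : ℝ) + 1)) := by
        rw [two_mul]
        exact add_le_add (hclose l hl z hz) (hclose k hk z hz)

theorem contDiffAt_of_dunklLaplacianFun_eq_zero {v : (ι → ℝ) → ℝ}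
    (hc : ContinuousOn v {x | x ⬝ᵥ x ≤ 1}) (h2 : ∀ x, x ⬝ᵥ x < 1 → ContDiffAt ℝ 2 v x)
    (hL : ∀ x, x ⬝ᵥ x < 1 → D.IsRegular x → D.dunklLaplacianFun v x = 0) {x : ι → ℝ}
    (hx : x ⬝ᵥ x < 1) : ContDiffAt ℝ (⊤ : ℕ∞) v x := by
  choose H hH hHv using fun k : ℕ =>
    D.exists_harmonic_abs_sub_eval_le hc h2 hL (Nat.one_div_pos_of_nat (α := ℝ) (n := k))
  obtain ⟨r, hxr, hr1⟩ := exists_between ((Real.sqrt_lt' one_pos).2 (by simpa using hx))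
  have hr0 : 0 < r := (Real.sqrt_nonneg _).trans_lt hxr
  have hopen : IsOpen {y : ι → ℝ | y ⬝ᵥ y < r ^ 2} :=
    isOpen_lt continuous_dotProduct_self continuous_const
  refine contDiffAt_infty.2 fun m => (contDiffOn_of_tendsto_eval hopen (f := H) (fun β => ?_)
    (fun y hy => ?_) m).contDiffAt (hopen.mem_nhds ((Real.sqrt_lt' hr0).1 hxr))
  · exact (D.uniformCauchySeqOn_eval_iteratedPDeriv hH (fun k z hz => hHv k z hz.le) hr0 hr1 β).mono
      fun y (hy : y ⬝ᵥ y < r ^ 2) => hy.le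
  · have hy1 : y ⬝ᵥ y ≤ 1 := (le_of_lt hy).trans (pow_le_one₀ hr0.le hr1.le)
    refine tendsto_iff_dist_tendsto_zero.2 (squeeze_zero (fun _ => dist_nonneg) (fun k => ?_)
      tendsto_one_div_add_atTop_nhds_zero_nat)
    rw [dist_comm, Real.dist_eq]
    exact hHv k y hy1

end DunklSystem

/-! ### Transfer to the half-space -/

section AffineChange

variable {E E' : Type*} [NormedAddCommGroup E] [NormedSpace ℝ E] [NormedAddCommGroup E']
  [NormedSpace ℝ E'] {F : E' → ℝ} {x : E}

lemma fderiv_comp_const_add_apply {c : E'} {L : E →L[ℝ] E'} (hF : DifferentiableAt ℝ F (c + L x))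
    (v : E) : fderiv ℝ (fun y => F (c + L y)) x v = fderiv ℝ F (c + L x) (L v) :=
  congrArg (fun A : E →L[ℝ] ℝ => A v)
    (hF.hasFDerivAt.comp x (L.hasFDerivAt.const_add c)).fderiv

lemma secondDirDeriv_comp_const_add {c : E'} {L : E →L[ℝ] E'} (hF : ContDiffAt ℝ 2 F (c + L x))
    (v : E) : secondDirDeriv (fun y => F (c + L y)) x v = secondDirDeriv F (c + L x) (L v) := by
  have hfderiv : (fun y => fderiv ℝ (fun z => F (c + L z)) y v) =ᶠ[𝓝 x]
      fun y => fderiv ℝ F (c + L y) (L v) := by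
    filter_upwards [(L.continuous.const_add c).continuousAt.eventually (hF.eventually (by simp))]
      with y hy using fderiv_comp_const_add_apply (hy.differentiableAt two_ne_zero) v
  rw [secondDirDeriv, hfderiv.fderiv_eq, secondDirDeriv, fderiv_comp_const_add_apply
    ((contDiffAt_fderiv_apply hF (L v)).differentiableAt one_ne_zero)]

end AffineChange

section HalfSpace

variable {d : ℕ} {α : Ed d}

lemma reflAt_reflAt (hα : ⟪α, α⟫ = (2 : ℝ)) (x : Ed d) : reflAt α (reflAt α x) = x := by
  simp only [reflAt, inner_sub_right, inner_smul_right, hα]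
  module

lemma reflAt_self (hα : ⟪α, α⟫ = (2 : ℝ)) : reflAt α α = -α := by
  rw [reflAt, hα]
  module

lemma reflAt_neg_left (α x : Ed d) : reflAt (-α) x = reflAt α x := by
  simp only [reflAt, inner_neg_left, smul_neg, neg_smul, neg_neg]

lemma reflAt_smul (α x : Ed d) (c : ℝ) : reflAt α (c • x) = c • reflAt α x := by
  simp only [reflAt, inner_smul_right, smul_sub, smul_smul]

/-- The summand of `dunklLap` belonging to the root `α`, without the factor `κ α`. -/
def halfSpaceRootTerm (u : Ed d × ℝ → ℝ) (p : Ed d × ℝ) (α : Ed d) : ℝ :=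
  fderiv ℝ u p (α, 0) / ⟪α, p.1⟫ - (u p - u (reflAt α p.1, p.2)) / ⟪α, p.1⟫ ^ 2

lemma halfSpaceRootTerm_neg (u : Ed d × ℝ → ℝ) (p : Ed d × ℝ) (α : Ed d) :
    halfSpaceRootTerm u p (-α) = halfSpaceRootTerm u p α := by
  have hneg : ((-α, 0) : Ed d × ℝ) = -(α, 0) := by simp
  simp only [halfSpaceRootTerm, hneg, map_neg, inner_neg_left, neg_div_neg_eq, neg_sq,
    reflAt_neg_left]

variable (d) in
/-- `ℝ^d × ℝ` in coordinates indexed by `Option (Fin d)`, with `none` for the last one. -/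
def coordEquiv : (Option (Fin d) → ℝ) ≃L[ℝ] Ed d × ℝ :=
  LinearEquiv.toContinuousLinearEquiv
    { toFun z := (WithLp.toLp 2 fun i => z (some i), z none)
      invFun p o := o.elim p.2 p.1
      map_add' _ _ := rfl
      map_smul' _ _ := rfl
      left_inv z := by ext (_ | _) <;> rfl
      right_inv _ := rfl }

lemma coordEquiv_apply (z : Option (Fin d) → ℝ) :
    coordEquiv d z = (WithLp.toLp 2 fun i => z (some i), z none) := rfl

lemma dotProduct_eq_inner_add_mul (v w : Option (Fin d) → ℝ) : v ⬝ᵥ w =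
    ⟪(coordEquiv d v).1, (coordEquiv d w).1⟫ + (coordEquiv d v).2 * (coordEquiv d w).2 := by
  simp [coordEquiv_apply, dotProduct, Fintype.sum_option, PiLp.inner_apply, mul_comm, add_comm]

lemma coordEquiv_symm_dotProduct (α : Ed d) (z : Option (Fin d) → ℝ) :
    (coordEquiv d).symm (α, 0) ⬝ᵥ z = ⟪α, (coordEquiv d z).1⟫ := by
  rw [dotProduct_eq_inner_add_mul, ContinuousLinearEquiv.apply_symm_apply, zero_mul, add_zero]

lemma dotProduct_self_eq_norm_sq_add_sq (z : Option (Fin d) → ℝ) :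
    z ⬝ᵥ z = ‖(coordEquiv d z).1‖ ^ 2 + (coordEquiv d z).2 ^ 2 := by
  rw [dotProduct_eq_inner_add_mul, real_inner_self_eq_norm_sq, sq (coordEquiv d z).2]

lemma sum_secondDirDeriv_coordEquiv (u : Ed d × ℝ → ℝ) (p : Ed d × ℝ) :
    ∑ o, secondDirDeriv u p (coordEquiv d (Pi.single o 1)) = lapE u p := by
  have hnone : coordEquiv d (Pi.single none 1) = (0, 1) := by
    ext <;> simp [coordEquiv_apply]
  have hsome (i : Fin d) :
      coordEquiv d (Pi.single (some i) 1) = (EuclideanSpace.single i 1, 0) := by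
    ext <;> simp [coordEquiv_apply, Pi.single_apply]
  simp only [Fintype.sum_option, hnone, hsome]
  exact add_comm _ _

/-- The affine parametrization by the unit ball of the ball of radius `ρ` centred at `(0, y)`. Such
a ball is invariant under the reflections, which fix its centre. -/
def ballParam (y ρ : ℝ) (z : Option (Fin d) → ℝ) : Ed d × ℝ :=
  ((0 : Ed d), y) + ρ • coordEquiv d z

lemma ballParam_fst (y ρ : ℝ) (z : Option (Fin d) → ℝ) :
    (ballParam y ρ z).1 = ρ • (coordEquiv d z).1 := by simp [ballParam]

lemma ballParam_snd (y ρ : ℝ) (z : Option (Fin d) → ℝ) :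
    (ballParam y ρ z).2 = y + ρ * (coordEquiv d z).2 := by simp [ballParam]

lemma contDiff_ballParam {n : WithTop ℕ∞} (y ρ : ℝ) :
    ContDiff ℝ n (ballParam y ρ : (Option (Fin d) → ℝ) → Ed d × ℝ) :=
  contDiff_const.add ((coordEquiv d).contDiff.const_smul ρ)

lemma fderiv_comp_ballParam {u : Ed d × ℝ → ℝ} {y ρ : ℝ} {z : Option (Fin d) → ℝ}
    (hu : DifferentiableAt ℝ u (ballParam y ρ z)) (w : Option (Fin d) → ℝ) :
    fderiv ℝ (fun z => u (ballParam y ρ z)) z w =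
      ρ * fderiv ℝ u (ballParam y ρ z) (coordEquiv d w) :=
  (fderiv_comp_const_add_apply (L := ρ • (coordEquiv d).toContinuousLinearMap) hu w).trans
    (map_smul _ ρ _)

lemma secondDirDeriv_comp_ballParam {u : Ed d × ℝ → ℝ} {y ρ : ℝ} {z : Option (Fin d) → ℝ}
    (hu : ContDiffAt ℝ 2 u (ballParam y ρ z)) (w : Option (Fin d) → ℝ) :
    secondDirDeriv (fun z => u (ballParam y ρ z)) z w =
      ρ ^ 2 * secondDirDeriv u (ballParam y ρ z) (coordEquiv d w) :=
  (secondDirDeriv_comp_const_add (L := ρ • (coordEquiv d).toContinuousLinearMap) hu w).trans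
    (secondDirDeriv_smul u _ ρ _)

lemma contDiffAt_of_comp_ballParam {u : Ed d × ℝ → ℝ} {y ρ : ℝ} (hρ : ρ ≠ 0)
    {z : Option (Fin d) → ℝ} {n : WithTop ℕ∞}
    (h : ContDiffAt ℝ n (fun z => u (ballParam y ρ z)) z) : ContDiffAt ℝ n u (ballParam y ρ z) := by
  let inverse (q : Ed d × ℝ) : Option (Fin d) → ℝ := ρ⁻¹ • (coordEquiv d).symm (q - (0, y))
  have hinverse : ContDiff ℝ n inverse :=
    ((coordEquiv d).symm.contDiff.comp (contDiff_id.sub contDiff_const)).const_smul ρ⁻¹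
  have hleft : inverse (ballParam y ρ z) = z := by simp [inverse, ballParam, smul_smul, hρ]
  have hright (q : Ed d × ℝ) : ballParam y ρ (inverse q) = q := by
    simp [inverse, ballParam, smul_smul, hρ]
  have hcomp : ContDiffAt ℝ n (fun q => u (ballParam y ρ (inverse q))) (ballParam y ρ z) :=
    ContDiffAt.comp (g := fun z => u (ballParam y ρ z)) (f := inverse) _ (hleft.symm ▸ h)
      hinverse.contDiffAt
  simpa only [hright] using hcomp

lemma ballParam_mem_upperHS {y ρ : ℝ} (hρ : 0 < ρ) (hρy : ρ < y) {z : Option (Fin d) → ℝ}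
    (hz : z ⬝ᵥ z ≤ 1) : ballParam y ρ z ∈ upperHS d := by
  have hlast : -1 ≤ (coordEquiv d z).2 := by
    rw [dotProduct_self_eq_norm_sq_add_sq] at hz
    nlinarith [sq_nonneg ‖(coordEquiv d z).1‖]
  change 0 < (ballParam y ρ z).2
  rw [ballParam_snd]
  nlinarith

lemma exists_eq_ballParam {p : Ed d × ℝ} (hp : p ∈ upperHS d) :
    ∃ y ρ : ℝ, 0 < ρ ∧ ρ < y ∧ ∃ z : Option (Fin d) → ℝ, z ⬝ᵥ z < 1 ∧ ballParam y ρ z = p := by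
  change 0 < p.2 at hp
  -- `p` is closer to `(0, y)` than `y` exactly when `‖p.1‖ ^ 2 + p.2 ^ 2 < 2 * p.2 * y`.
  set y := (‖p.1‖ ^ 2 + p.2 ^ 2) / (2 * p.2) + 1 with hy
  have hy0 : 0 < y := by positivity
  have hdist : ‖p.1‖ ^ 2 + (p.2 - y) ^ 2 < y ^ 2 := by
    have : 2 * p.2 * y = ‖p.1‖ ^ 2 + p.2 ^ 2 + 2 * p.2 := by rw [hy]; field_simp
    nlinarith
  obtain ⟨ρ, hdistρ, hρy⟩ := exists_between ((Real.sqrt_lt' hy0).2 hdist)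
  have hρ : 0 < ρ := (Real.sqrt_nonneg _).trans_lt hdistρ
  refine ⟨y, ρ, hρ, hρy, ρ⁻¹ • (coordEquiv d).symm (p - (0, y)), ?_, ?_⟩
  · have hcoord : (ρ⁻¹) ^ 2 * (‖p.1‖ ^ 2 + (p.2 - y) ^ 2) < 1 := by
      rw [inv_pow, inv_mul_lt_one₀ (by positivity)]
      exact (Real.sqrt_lt' hρ).1 hdistρ
    rw [dotProduct_self_eq_norm_sq_add_sq, map_smul, ContinuousLinearEquiv.apply_symm_apply]
    simpa [norm_smul, mul_pow, mul_add] using hcoord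
  · simp [ballParam, smul_smul, hρ.ne']

end HalfSpace

namespace IsRootSystem

variable {d : ℕ} {R Rp : Finset (Ed d)} {κ : Ed d → ℝ}

lemma neg_mem (h : IsRootSystem R Rp κ) {α : Ed d} (hα : α ∈ R) : -α ∈ R :=
  reflAt_self (h.norm_two _ hα) ▸ h.refl_mem _ hα _ hα

lemma kappa_neg (h : IsRootSystem R Rp κ) {α : Ed d} (hα : α ∈ R) : κ (-α) = κ α :=
  reflAt_self (h.norm_two _ hα) ▸
    h.kappa_inv (reflAt α) (Submonoid.subset_closure ⟨α, hα, rfl⟩) α hα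

lemma sum_eq_two_mul_sum (h : IsRootSystem R Rp κ) {f : Ed d → ℝ}
    (hf : ∀ α ∈ R, f (-α) = f α) : ∑ α ∈ R, f α = 2 * ∑ α ∈ Rp, f α := by
  classical
  have hunion : R = Rp ∪ Rp.image Neg.neg := by
    ext α
    simp only [Finset.mem_union, Finset.mem_image]
    constructor
    · intro hα
      rcases h.pos_split α hα with ⟨hpos, _⟩ | ⟨_, hneg⟩
      · exact Or.inl hpos
      · exact Or.inr ⟨-α, hneg, neg_neg α⟩
    · rintro (hα | ⟨β, hβ, rfl⟩)
      · exact h.pos_sub hα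
      · exact h.neg_mem (h.pos_sub hβ)
  have hdisjoint : Disjoint Rp (Rp.image Neg.neg) := by
    rw [Finset.disjoint_left]
    intro α hα hα'
    obtain ⟨β, hβ, rfl⟩ := Finset.mem_image.1 hα'
    rcases h.pos_split β (h.pos_sub hβ) with ⟨_, hneg⟩ | ⟨hneg, _⟩
    · exact hneg hα
    · exact hneg hβ
  rw [hunion, Finset.sum_union hdisjoint, Finset.sum_image neg_injective.injOn, two_mul,
    Finset.sum_congr rfl fun α hα => hf α (h.pos_sub hα)]

variable (h : IsRootSystem R Rp κ)

/-- The coordinate form of a root system in `ℝ^d`, acting trivially on the last coordinate of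
`ℝ^d × ℝ`. -/
def toDunklSystem : DunklSystem (Option (Fin d)) {α // α ∈ R} where
  root α := (coordEquiv d).symm (α.1, 0)
  mult α := κ α.1 / 2
  perm α := Function.Involutive.toPerm
    (fun β => ⟨reflAt α.1 β.1, h.refl_mem _ α.2 _ β.2⟩)
    fun β => Subtype.ext (reflAt_reflAt (h.norm_two _ α.2) β.1)
  root_dotProduct_self α := by
    rw [coordEquiv_symm_dotProduct, ContinuousLinearEquiv.apply_symm_apply]
    exact h.norm_two _ α.2
  root_perm α β := by
    rw [coordEquiv_symm_dotProduct, ContinuousLinearEquiv.apply_symm_apply, ← map_smul, ← map_sub]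
    congr 1
    ext <;> simp [reflAt]
  mult_perm α β := congrArg (· / 2)
    (h.kappa_inv (reflAt α.1) (Submonoid.subset_closure ⟨α.1, α.2, rfl⟩) β.1 β.2)
  mult_nonneg α := div_nonneg (h.kappa_nonneg _ α.2) zero_le_two

lemma root_dotProduct (α : {α // α ∈ R}) (z : Option (Fin d) → ℝ) :
    h.toDunklSystem.root α ⬝ᵥ z = ⟪α.1, (coordEquiv d z).1⟫ :=
  coordEquiv_symm_dotProduct α.1 z

lemma coordEquiv_root (α : {α // α ∈ R}) : coordEquiv d (h.toDunklSystem.root α) = (α.1, 0) :=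
  (coordEquiv d).apply_symm_apply _

lemma ballParam_reflection (α : {α // α ∈ R}) (y ρ : ℝ) (z : Option (Fin d) → ℝ) :
    ballParam y ρ (h.toDunklSystem.reflection α z) =
      (reflAt α.1 (ballParam y ρ z).1, (ballParam y ρ z).2) := by
  have hcoord : coordEquiv d (h.toDunklSystem.reflection α z) =
      (reflAt α.1 (coordEquiv d z).1, (coordEquiv d z).2) := by
    rw [DunklSystem.reflection_apply, root_dotProduct, map_sub, map_smul, coordEquiv_root]
    ext <;> simp [reflAt]
  ext1
  · rw [ballParam_fst, ballParam_fst, hcoord, reflAt_smul]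
  · rw [ballParam_snd, ballParam_snd, hcoord]

lemma isRegular_ballParam {y ρ : ℝ} (hρ : ρ ≠ 0) {z : Option (Fin d) → ℝ}
    (hz : h.toDunklSystem.IsRegular z) : isRegular R (ballParam y ρ z).1 := by
  intro α hα
  rw [ballParam_fst, inner_smul_right, ← h.root_dotProduct ⟨α, hα⟩]
  exact mul_ne_zero hρ (hz ⟨α, hα⟩)

lemma rootTerm_comp_ballParam {u : Ed d × ℝ → ℝ} {y ρ : ℝ} (hρ : ρ ≠ 0)
    {z : Option (Fin d) → ℝ} (hu : DifferentiableAt ℝ u (ballParam y ρ z)) (α : {α // α ∈ R}) :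
    h.toDunklSystem.rootTerm α (fun z => u (ballParam y ρ z)) z =
      ρ ^ 2 * halfSpaceRootTerm u (ballParam y ρ z) α := by
  rw [DunklSystem.rootTerm, fderiv_comp_ballParam hu, coordEquiv_root, ballParam_reflection,
    root_dotProduct, halfSpaceRootTerm]
  have hinner : ⟪α.1, (ballParam y ρ z).1⟫ = ρ * ⟪α.1, (coordEquiv d z).1⟫ := by
    rw [ballParam_fst, inner_smul_right]
  rw [hinner]
  field_simp

theorem dunklLaplacianFun_comp_ballParam {u : Ed d × ℝ → ℝ} {y ρ : ℝ} (hρ : ρ ≠ 0)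
    {z : Option (Fin d) → ℝ} (hu : ContDiffAt ℝ 2 u (ballParam y ρ z)) :
    h.toDunklSystem.dunklLaplacianFun (fun z => u (ballParam y ρ z)) z =
      ρ ^ 2 * dunklLap Rp κ u (ballParam y ρ z) := by
  set p := ballParam y ρ z
  have heven : ∀ α ∈ R, κ (-α) * halfSpaceRootTerm u p (-α) = κ α * halfSpaceRootTerm u p α :=
    fun α hα => by rw [h.kappa_neg hα, halfSpaceRootTerm_neg]
  have hroots : ∑ α, 2 * h.toDunklSystem.mult α *
      h.toDunklSystem.rootTerm α (fun z => u (ballParam y ρ z)) z =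
        ρ ^ 2 * ∑ α ∈ R, κ α * halfSpaceRootTerm u p α := by
    rw [← Finset.sum_coe_sort R, Finset.mul_sum]
    refine Finset.sum_congr rfl fun α _ => ?_
    rw [h.rootTerm_comp_ballParam hρ (hu.differentiableAt two_ne_zero)]
    simp only [toDunklSystem]
    ring
  rw [DunklSystem.dunklLaplacianFun, hroots, h.sum_eq_two_mul_sum heven]
  simp only [secondDirDeriv_comp_ballParam hu]
  rw [← Finset.mul_sum, sum_secondDirDeriv_coordEquiv, ← mul_add]
  rfl

end IsRootSystem

/-- **Proposition 3.8.** A `C²` function on `ℝ^{d+1}₊` which is `κ`-harmonic is in fact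
infinitely differentiable on `ℝ^{d+1}₊`. -/
theorem kHarmonic_smooth
    {d : ℕ} (hd : 1 ≤ d) (R Rp : Finset (Ed d)) (κ : Ed d → ℝ)
    (hRS : IsRootSystem R Rp κ)
    (u : Ed d × ℝ → ℝ) (hu : KHarmonicOn R Rp κ u (upperHS d)) :
    ContDiffOn ℝ (⊤ : ℕ∞) u (upperHS d) := by
  intro p hp
  obtain ⟨y, ρ, hρ, hρy, z, hz, rfl⟩ := exists_eq_ballParam hp
  have hmem {w : Option (Fin d) → ℝ} (hw : w ⬝ᵥ w ≤ 1) : ballParam y ρ w ∈ upperHS d :=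
    ballParam_mem_upperHS hρ hρy hw
  have hopen : IsOpen (upperHS d) := isOpen_lt continuous_const continuous_snd
  have hC2 {w : Option (Fin d) → ℝ} (hw : w ⬝ᵥ w ≤ 1) : ContDiffAt ℝ 2 u (ballParam y ρ w) :=
    hu.1.contDiffAt (hopen.mem_nhds (hmem hw))
  have hC2' {w : Option (Fin d) → ℝ} (hw : w ⬝ᵥ w ≤ 1) :
      ContDiffAt ℝ 2 (fun w => u (ballParam y ρ w)) w :=
    (hC2 hw).comp w (contDiff_ballParam y ρ).contDiffAt
  have hharmonic (w : Option (Fin d) → ℝ) (hw : w ⬝ᵥ w < 1)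
      (hreg : hRS.toDunklSystem.IsRegular w) :
      hRS.toDunklSystem.dunklLaplacianFun (fun w => u (ballParam y ρ w)) w = 0 := by
    rw [hRS.dunklLaplacianFun_comp_ballParam hρ.ne' (hC2 hw.le),
      hu.2 _ (hmem hw.le) (hRS.isRegular_ballParam hρ.ne' hreg), mul_zero]
  have hsmooth := hRS.toDunklSystem.contDiffAt_of_dunklLaplacianFun_eq_zero
    (fun w hw => (hC2' hw).continuousAt.continuousWithinAt) (fun w hw => hC2' hw.le) hharmonic hz
  exact (contDiffAt_of_comp_ballParam hρ.ne' hsmooth).contDiffWithinAt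

end
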